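/- arXiv:2402.13491 — 13 statements merged into one kernel-verified Lean document; each statement's English description precedes it below -/
import Mathlib

section
/- Let n be a finite type, let J : Matrix (n ⊕ n) (n ⊕ n) ℂ be the block matrix J = Matrix.fromBlocks 0 1 (-1) 0, and let M : Matrix (n ⊕ n) (n ⊕ n) ℂ be Hamiltonian, i.e. (J * M)ᴴ = J * M. Then the spectrum of M is symmetric with respect to the imaginary axis: for every λ ∈ ℂ, if λ ∈ spectrum ℂ M then -(starRingEnd ℂ λ) ∈ spectrum ℂ M. -/
open Matrix

theorem hamiltonian_spectrum_symmetric {n : Type*} [Fintype n] [DecidableEq n]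
    (J M : Matrix (n ⊕ n) (n ⊕ n) ℂ)
    (hJ : J = Matrix.fromBlocks 0 1 (-1) 0)
    (hM : (J * M)ᴴ = J * M) :
    ∀ lam : ℂ, lam ∈ spectrum ℂ M → -(starRingEnd ℂ lam) ∈ spectrum ℂ M := by
  intro lam hl
  have hJJ : J * J = -1 := by
    rw [hJ, Matrix.fromBlocks_multiply, ← Matrix.fromBlocks_one, Matrix.fromBlocks_neg]
    simp
  have hJH : Jᴴ = -J := by
    rw [hJ, Matrix.fromBlocks_conjTranspose, Matrix.fromBlocks_neg]
    simp
  let u : (Matrix (n ⊕ n) (n ⊕ n) ℂ)ˣ := ⟨J, -J, by simp [hJJ], by simp [hJJ]⟩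
  have h1 : (u : Matrix (n ⊕ n) (n ⊕ n) ℂ) * M * (u⁻¹ : (Matrix (n ⊕ n) (n ⊕ n) ℂ)ˣ) = -star M := by
    change J * M * (-J) = -Mᴴ
    rw [← hM, Matrix.conjTranspose_mul, hJH]
    simp [Matrix.mul_assoc, hJJ]
  have h2 : spectrum ℂ (-star M) = spectrum ℂ M := by
    rw [← h1, spectrum.units_conjugate]
  rw [← h2, ← spectrum.neg_eq, spectrum.map_star, Set.mem_neg, Set.mem_star]
  simpa using hl
end

section
/- Let n be a finite type, A G K : Matrix n n ℂ with G and K Hermitian, and set M = Matrix.fromBlocks A G K (-Aᴴ). Suppose λ ∈ ℂ and x y : n → ℂ satisfy M *ᵥ (Sum.elim x y) = λ • (Sum.elim x y). Then (star x) ⬝ᵥ (K *ᵥ x) + (star y) ⬝ᵥ (G *ᵥ y) = (λ + starRingEnd ℂ λ) * ((star x) ⬝ᵥ y). -/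
open Matrix

theorem hamiltonian_eigen_identity {n : Type*} [Fintype n] [DecidableEq n]
    (A G K : Matrix n n ℂ) (hG : G.IsHermitian) (hK : K.IsHermitian)
    (lam : ℂ) (x y : n → ℂ)
    (h : (Matrix.fromBlocks A G K (-Aᴴ)) *ᵥ (Sum.elim x y) = lam • (Sum.elim x y)) :
    (star x) ⬝ᵥ (K *ᵥ x) + (star y) ⬝ᵥ (G *ᵥ y)
      = (lam + starRingEnd ℂ lam) * ((star x) ⬝ᵥ y) := by
  have h1 : A *ᵥ x + G *ᵥ y = lam • x := by
    funext i
    have := congrFun h (Sum.inl i)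
    simpa [Matrix.fromBlocks_mulVec] using this
  have h2 : K *ᵥ x - Aᴴ *ᵥ y = lam • y := by
    funext i
    have := congrFun h (Sum.inr i)
    simpa [Matrix.fromBlocks_mulVec, Matrix.neg_mulVec, sub_eq_add_neg] using this
  have e1 : star x ⬝ᵥ (Aᴴ *ᵥ y) = star (A *ᵥ x) ⬝ᵥ y := by
    rw [Matrix.star_mulVec, Matrix.dotProduct_mulVec]
  have e2 : star (G *ᵥ y) ⬝ᵥ y = star y ⬝ᵥ (G *ᵥ y) := by
    rw [Matrix.star_mulVec, hG.eq, Matrix.dotProduct_mulVec]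
  have e3 : star (A *ᵥ x) ⬝ᵥ y + star (G *ᵥ y) ⬝ᵥ y
      = starRingEnd ℂ lam * (star x ⬝ᵥ y) := by
    rw [← add_dotProduct, ← star_add, h1, star_smul, smul_dotProduct]
    rfl
  have e4 : star x ⬝ᵥ (K *ᵥ x) - star x ⬝ᵥ (Aᴴ *ᵥ y) = lam * (star x ⬝ᵥ y) := by
    rw [← dotProduct_sub, h2, dotProduct_smul, smul_eq_mul]
  linear_combination e3 + e4 + e1 - e2
end

section
/- Let n be a finite type, A G K : Matrix n n ℂ with G and K positive definite, and set M = Matrix.fromBlocks A G K (-Aᴴ). Suppose λ ∈ ℂ and x y : n → ℂ are such that Sum.elim x y ≠ 0 and M *ᵥ (Sum.elim x y) = λ • (Sum.elim x y). Then Re λ ≠ 0. -/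
open Matrix
open scoped ComplexOrder

theorem hamiltonian_posdef_no_imaginary_eigen {n : Type*} [Fintype n] [DecidableEq n]
    (A G K : Matrix n n ℂ) (hG : G.PosDef) (hK : K.PosDef)
    (lam : ℂ) (x y : n → ℂ) (hxy : Sum.elim x y ≠ 0)
    (h : (Matrix.fromBlocks A G K (-Aᴴ)) *ᵥ (Sum.elim x y) = lam • (Sum.elim x y)) :
    lam.re ≠ 0 := by
  intro hre
  rw [Matrix.fromBlocks_mulVec] at h
  have h1 : A *ᵥ x + G *ᵥ y = lam • x := by
    funext i
    simpa using congrFun h (Sum.inl i)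
  have h2 : K *ᵥ x + (-Aᴴ) *ᵥ y = lam • y := by
    funext i
    simpa using congrFun h (Sum.inr i)
  have e1 := congrArg (fun v => star y ⬝ᵥ v) h1
  have e2 := congrArg (fun v => star x ⬝ᵥ v) h2
  simp only [dotProduct_add, neg_mulVec, dotProduct_neg, dotProduct_smul, smul_eq_mul] at e1 e2
  have hp : star x ⬝ᵥ (Aᴴ *ᵥ y) = star (star y ⬝ᵥ (A *ᵥ x)) := by
    rw [← star_dotProduct_star, star_star, star_mulVec, dotProduct_mulVec, dotProduct_comm,
      dotProduct_comm]
  have hs : star x ⬝ᵥ y = star (star y ⬝ᵥ x) := by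
    rw [← star_dotProduct_star, star_star, dotProduct_comm, dotProduct_comm]
  rw [hp, hs] at e2
  have r1 := congrArg Complex.re e1
  have r2 := congrArg Complex.re e2
  simp [hre] at r1 r2
  have pos : ∀ {M : Matrix n n ℂ}, M.PosDef → ∀ v, v ≠ 0 → 0 < (star v ⬝ᵥ (M *ᵥ v)).re :=
    fun hM v hv => (Complex.lt_def.1 (hM.dotProduct_mulVec_pos hv)).1
  by_cases hx : x = 0
  · by_cases hy : y = 0
    · apply hxy
      subst hx hy
      funext i
      cases i <;> rfl
    · have := pos hG y hy
      subst hx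
      simp at r1 r2
      linarith
  · have a := pos hK x hx
    by_cases hy : y = 0
    · subst hy
      simp at r1 r2
      linarith
    · have := pos hG y hy
      linarith
end

section
/- Let n be a finite type, A G K : Matrix n n ℂ with G and K positive semidefinite, and set M = Matrix.fromBlocks A G K (-Aᴴ). Suppose λ ∈ ℂ with Re λ = 0 and x y : n → ℂ satisfy M *ᵥ (Sum.elim x y) = λ • (Sum.elim x y). Then A *ᵥ x = λ • x and Aᴴ *ᵥ y = (-λ) • y. -/
open Matrix
open scoped ComplexOrder

theorem hamiltonian_possemidef_imaginary_eigen {n : Type*} [Fintype n] [DecidableEq n]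
    (A G K : Matrix n n ℂ) (hG : G.PosSemidef) (hK : K.PosSemidef)
    (lam : ℂ) (hlam : lam.re = 0) (x y : n → ℂ)
    (h : (Matrix.fromBlocks A G K (-Aᴴ)) *ᵥ (Sum.elim x y) = lam • (Sum.elim x y)) :
    A *ᵥ x = lam • x ∧ Aᴴ *ᵥ y = (-lam) • y := by
  rw [Matrix.fromBlocks_mulVec] at h
  have h1 : A *ᵥ x + G *ᵥ y = lam • x := by
    funext i
    simpa using congrFun h (Sum.inl i)
  have h2 : K *ᵥ x + (-Aᴴ) *ᵥ y = lam • y := by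
    funext i
    simpa using congrFun h (Sum.inr i)
  have hl : star lam = -lam := by
    apply Complex.ext <;> simp [hlam]
  have e1 : star y ⬝ᵥ (A *ᵥ x) + star y ⬝ᵥ (G *ᵥ y) = lam * (star y ⬝ᵥ x) := by
    rw [← dotProduct_add, h1, dotProduct_smul, smul_eq_mul]
  have e2 : star x ⬝ᵥ (K *ᵥ x) - star x ⬝ᵥ (Aᴴ *ᵥ y) = lam * (star x ⬝ᵥ y) := by
    rw [← smul_eq_mul, ← dotProduct_smul, ← h2, dotProduct_add, neg_mulVec, dotProduct_neg,
      sub_eq_add_neg]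
  have e3 : star (star y ⬝ᵥ (A *ᵥ x)) = star x ⬝ᵥ (Aᴴ *ᵥ y) := by
    rw [star_dotProduct, star_star, star_mulVec, ← dotProduct_mulVec]
  have e4 : star (star y ⬝ᵥ x) = star x ⬝ᵥ y := by
    rw [star_dotProduct, star_star]
  have pG := hG.dotProduct_mulVec_nonneg y
  have pK := hK.dotProduct_mulVec_nonneg x
  have e5 := congrArg star e1
  rw [star_add, e3, star_mul', hl, e4, (IsSelfAdjoint.of_nonneg pG).star_eq] at e5
  have s : star x ⬝ᵥ (K *ᵥ x) + star y ⬝ᵥ (G *ᵥ y) = 0 := by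
    linear_combination e2 + e5
  obtain ⟨k0, g0⟩ := (add_eq_zero_iff_of_nonneg pK pG).1 s
  rw [hK.dotProduct_mulVec_zero_iff] at k0
  rw [hG.dotProduct_mulVec_zero_iff] at g0
  rw [g0, add_zero] at h1
  rw [k0, zero_add, neg_mulVec] at h2
  exact ⟨h1, by rw [neg_smul, ← h2, neg_neg]⟩
end

section
/- (Schur–Hamiltonian decomposition) Let n : ℕ, let J : Matrix (Fin n ⊕ Fin n) (Fin n ⊕ Fin n) ℂ be Matrix.fromBlocks 0 1 (-1) 0, and let M : Matrix (Fin n ⊕ Fin n) (Fin n ⊕ Fin n) ℂ be Hamiltonian, i.e. (J * M)ᴴ = J * M, with no purely imaginary eigenvalues (for every λ ∈ spectrum ℂ M, Re λ ≠ 0). Then there exist Q : Matrix (Fin n ⊕ Fin n) (Fin n ⊕ Fin n) ℂ and T R : Matrix (Fin n) (Fin n) ℂ such that: Q is unitary (Qᴴ * Q = 1) and symplectic (Qᴴ * J * Q = J); T is upper triangular (T i j = 0 whenever j < i) and stable (every λ ∈ spectrum ℂ T satisfies Re λ < 0); R is Hermitian (Rᴴ = R); and Qᴴ * M * Q = Matrix.fromBlocks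 T R 0 (-Tᴴ). -/
open Matrix

theorem aux_neg_eig {E : Type} [NormedAddCommGroup E] [InnerProductSpace ℂ E]
    [FiniteDimensional ℂ E] [Nontrivial E] (J M : E →ₗ[ℂ] E)
    (hJ1 : ∀ x y, inner ℂ (J x) y = - inner ℂ x (J y))
    (hJ2 : ∀ x, J (J x) = -x)
    (hM : ∀ x y, inner ℂ (J (M x)) y = inner ℂ x (J (M y)))
    (hs : ∀ (μ : ℂ) (v : E), v ≠ 0 → M v = μ • v → μ.re ≠ 0) :
    ∃ (μ : ℂ) (v : E), ‖v‖ = 1 ∧ M v = μ • v ∧ μ.re < 0 := by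
  suffices h : ∃ (μ : ℂ) (v : E), v ≠ 0 ∧ M v = μ • v ∧ μ.re < 0 by
    obtain ⟨μ, v, hv, h1, h2⟩ := h
    refine ⟨μ, ((‖v‖⁻¹ : ℝ) : ℂ) • v, ?_, ?_, h2⟩
    · rw [norm_smul]
      simp [hv]
    · rw [map_smul, h1, smul_comm]
  obtain ⟨μ, hμ⟩ := Module.End.exists_eigenvalue M
  obtain ⟨v, hv⟩ := hμ.exists_hasEigenvector
  have hv0 := hv.2
  have hMv : M v = μ • v := hv.apply_eq_smul
  rcases lt_or_gt_of_ne (hs μ v hv0 hMv) with h | h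
  · exact ⟨μ, v, hv0, hMv, h⟩
  · by_contra hcon
    push Not at hcon
    have hinj : Function.Injective (M + (starRingEnd ℂ μ) • LinearMap.id : E →ₗ[ℂ] E) := by
      rw [injective_iff_map_eq_zero]
      intro w hw
      by_contra hw0
      have h3 : M w = (- starRingEnd ℂ μ) • w := by
        simp at hw
        rw [neg_smul]
        exact eq_neg_of_add_eq_zero_left hw
      have := hcon _ w hw0 h3
      simp at this
      linarith
    have hsurj := LinearMap.surjective_of_injective hinj
    obtain ⟨y, hy⟩ := hsurj (J v)
    have hy' : M y + (starRingEnd ℂ μ) • y = J v := by simpa using hy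
    have h0 : inner ℂ (J v) (M y + (starRingEnd ℂ μ) • y) = 0 := by
      rw [inner_add_right, hJ1 v (M y), ← hM, hMv, map_smul, inner_smul_left, inner_smul_right]
      ring
    rw [hy'] at h0
    have h1 : J v = 0 := inner_self_eq_zero.1 h0
    have h2 := hJ2 v
    rw [h1, map_zero] at h2
    exact hv0 (neg_eq_zero.1 h2.symm)

theorem aux_main (n : ℕ) : ∀ {E : Type} [NormedAddCommGroup E] [InnerProductSpace ℂ E]
    [FiniteDimensional ℂ E] (J M : E →ₗ[ℂ] E)
    (_ : Module.finrank ℂ E = 2 * n)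
    (_ : ∀ x y, inner ℂ (J x) y = - inner ℂ x (J y))
    (_ : ∀ x, J (J x) = -x)
    (_ : ∀ x y, inner ℂ (J (M x)) y = inner ℂ x (J (M y)))
    (_ : ∀ (μ : ℂ) (v : E), v ≠ 0 → M v = μ • v → μ.re ≠ 0),
    ∃ u : Fin n → E, (∀ i j, inner ℂ (u i) (u j) = if i = j then (1 : ℂ) else 0) ∧
      (∀ i j, inner ℂ (u i) (J (u j)) = (0 : ℂ)) ∧
      (∀ i j, j < i → inner ℂ (u i) (M (u j)) = (0 : ℂ)) ∧
      (∀ j, (inner ℂ (u j) (M (u j)) : ℂ).re < 0) ∧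
      (∀ i j, inner ℂ (u i) (J (M (u j))) = (0 : ℂ)) := by
  induction n with
  | zero =>
    intro E _ _ _ J M _ _ _ _ _
    exact ⟨fun i => i.elim0, fun i => i.elim0, fun i => i.elim0, fun i => i.elim0,
      fun i => i.elim0, fun i => i.elim0⟩
  | succ n ih =>
    intro E _ _ _ J M hd hJ1 hJ2 hM hs
    have : Nontrivial E := Module.nontrivial_of_finrank_pos (R := ℂ) (by omega)
    obtain ⟨μ, v, hv1, hMv, hμ⟩ := aux_neg_eig J M hJ1 hJ2 hM hs
    have hvv : inner ℂ v v = (1 : ℂ) := by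
      rw [inner_self_eq_norm_sq_to_K, hv1]; simp
    have hvJ : inner ℂ v (J v) = (0 : ℂ) := by
      have h := hM v v
      rw [hMv, map_smul, inner_smul_left, inner_smul_right, hJ1] at h
      have h2 : (μ + starRingEnd ℂ μ) * inner ℂ v (J v) = 0 := by linear_combination -h
      rcases mul_eq_zero.1 h2 with h3 | h3
      · exfalso
        have := congrArg Complex.re h3
        simp at this
        linarith
      · exact h3
    have hJv : inner ℂ (J v) v = (0 : ℂ) := by rw [hJ1, hvJ, neg_zero]
    have hJJ : inner ℂ (J v) (J v) = (1 : ℂ) := by rw [hJ1, hJ2, inner_neg_right, hvv, neg_neg]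
    have hon : Orthonormal ℂ ![v, J v] := by
      rw [orthonormal_iff_ite]
      intro i j
      fin_cases i <;> fin_cases j <;> simp [hvv, hvJ, hJv, hJJ, -inner_self_eq_norm_sq_to_K]
    set S : Submodule ℂ E := Submodule.span ℂ (Set.range ![v, J v]) with hS
    have hSd : Module.finrank ℂ S = 2 := by
      rw [hS, finrank_span_eq_card hon.linearIndependent]; simp
    have hWd : Module.finrank ℂ Sᗮ = 2 * n := by
      have := Submodule.finrank_add_finrank_orthogonal S
      omega
    have hmem : ∀ x, x ∈ Sᗮ ↔ inner ℂ v x = (0 : ℂ) ∧ inner ℂ (J v) x = (0 : ℂ) := by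
      intro x
      constructor
      · intro hx
        rw [Submodule.mem_orthogonal] at hx
        exact ⟨hx _ (Submodule.subset_span ⟨0, rfl⟩), hx _ (Submodule.subset_span ⟨1, rfl⟩)⟩
      · rintro ⟨h1, h2⟩
        rw [Submodule.mem_orthogonal]
        intro u hu
        induction hu using Submodule.span_induction with
        | mem x hx =>
          obtain ⟨i, rfl⟩ := hx
          fin_cases i
          · exact h1
          · exact h2
        | zero => simp
        | add x y _ _ hx hy => rw [inner_add_left, hx, hy, add_zero]
        | smul a x _ hx => rw [inner_smul_left, hx, mul_zero]
    have hJW : ∀ x ∈ Sᗮ, J x ∈ Sᗮ := by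
      intro x hx
      rw [hmem] at hx ⊢
      refine ⟨?_, ?_⟩
      · have := hJ1 v x
        rw [hx.2] at this
        exact neg_eq_zero.1 this.symm
      · rw [hJ1, hJ2, inner_neg_right, hx.1]; simp
    -- the projected operator
    let P : E →ₗ[ℂ] E := M - (LinearMap.toSpanSingleton ℂ E v) ∘ₗ (innerₛₗ ℂ v) ∘ₗ M
    have hP : ∀ x, P x = M x - (inner ℂ v (M x) : ℂ) • v := fun x => rfl
    have hJM0 : ∀ x ∈ Sᗮ, inner ℂ (J v) (M x) = (0 : ℂ) := by
      intro x hx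
      rw [hJ1, ← hM, hMv, map_smul, inner_smul_left, ((hmem x).1 hx).2]; simp
    have hPW : ∀ x ∈ Sᗮ, P x ∈ Sᗮ := by
      intro x hx
      rw [hmem, hP, inner_sub_right, inner_sub_right, inner_smul_right, inner_smul_right, hvv, hJv,
        hJM0 x hx]
      simp
    have hxv : ∀ x ∈ Sᗮ, inner ℂ x v = (0 : ℂ) := by
      intro x hx
      rw [← inner_conj_symm, ((hmem x).1 hx).1, map_zero]
    have hxJv : ∀ x ∈ Sᗮ, inner ℂ x (J v) = (0 : ℂ) := by
      intro x hx
      rw [← inner_conj_symm, ((hmem x).1 hx).2, map_zero]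
    have hPi : ∀ x ∈ Sᗮ, ∀ y, inner ℂ x (P y) = (inner ℂ x (M y) : ℂ) := by
      intro x hx y
      rw [hP, inner_sub_right, inner_smul_right, hxv x hx]; simp
    have hPJ : ∀ x ∈ Sᗮ, ∀ y, inner ℂ x (J (P y)) = (inner ℂ x (J (M y)) : ℂ) := by
      intro x hx y
      rw [hP, map_sub, map_smul, inner_sub_right, inner_smul_right, hxJv x hx]; simp
    obtain ⟨u, hu1, hu2, hu3, hu4, hu5⟩ := ih (E := Sᗮ) (J.restrict hJW) (P.restrict hPW) hWd
      (fun x y => hJ1 x y) (fun x => Subtype.ext (hJ2 x))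
      (by
        intro x y
        change inner ℂ (J (P x)) (y : E) = inner ℂ (x : E) (J (P y))
        rw [hPJ x x.2, ← inner_conj_symm, hPJ y y.2, inner_conj_symm, hM])
      (by
        intro ν w hw0 hw hν
        have hw' : M w - (inner ℂ v (M w) : ℂ) • v = ν • (w : E) := congrArg Subtype.val hw
        have hne : μ - ν ≠ 0 := by
          intro h
          have := congrArg Complex.re h
          simp at this
          linarith
        set a : ℂ := inner ℂ v (M w) with ha
        refine hs ν ((w : E) - (a / (μ - ν)) • v) ?_ ?_ hν
        · intro h
          have h2 : inner ℂ (w : E) ((w : E) - (a / (μ - ν)) • v) = (0 : ℂ) := by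
            rw [h, inner_zero_right]
          rw [inner_sub_right, inner_smul_right, hxv w w.2, mul_zero, sub_zero,
            inner_self_eq_zero] at h2
          exact hw0 (Subtype.ext h2)
        · have h3 : M w = ν • (w : E) + a • v := by rw [← hw']; abel
          rw [map_sub, map_smul, h3, hMv]
          have h4 : a = (a / (μ - ν)) * (μ - ν) := by field_simp
          set b := a / (μ - ν)
          rw [h4]
          module)
    have hc : ∀ i, inner ℂ v (u i : E) = (0 : ℂ) := fun i => ((hmem _).1 (u i).2).1
    have hcJ : ∀ i, inner ℂ (J v) (u i : E) = (0 : ℂ) := fun i => ((hmem _).1 (u i).2).2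
    refine ⟨Fin.cons v (fun i => (u i : E)), ?_, ?_, ?_, ?_, ?_⟩
    · intro i j
      refine Fin.cases ?_ (fun i => ?_) i <;> refine Fin.cases ?_ (fun j => ?_) j
      · simpa using hvv
      · simpa [(Fin.succ_ne_zero j).symm] using hc j
      · simpa [Fin.succ_ne_zero] using hxv _ (u i).2
      · simpa using hu1 i j
    · intro i j
      refine Fin.cases ?_ (fun i => ?_) i <;> refine Fin.cases ?_ (fun j => ?_) j
      · simpa using hvJ
      · simpa using ((hmem _).1 (hJW _ (u j).2)).1
      · simpa using hxJv _ (u i).2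
      · simpa using hu2 i j
    · intro i j
      refine Fin.cases ?_ (fun i => ?_) i <;> refine Fin.cases ?_ (fun j => ?_) j
      · intro h; exact absurd h (lt_irrefl _)
      · intro h; exact absurd h (Fin.not_lt_zero _)
      · intro _
        simp only [Fin.cons_zero, Fin.cons_succ]
        rw [hMv, inner_smul_right, hxv _ (u i).2, mul_zero]
      · intro h
        simp only [Fin.cons_succ]
        rw [← hPi _ (u i).2]
        exact hu3 i j (Fin.succ_lt_succ_iff.1 h)
    · intro j
      refine Fin.cases ?_ (fun j => ?_) j
      · simp only [Fin.cons_zero]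
        rw [hMv, inner_smul_right, hvv, mul_one]; exact hμ
      · simp only [Fin.cons_succ]
        rw [← hPi _ (u j).2]
        exact hu4 j
    · intro i j
      refine Fin.cases ?_ (fun i => ?_) i <;> refine Fin.cases ?_ (fun j => ?_) j
      · simp only [Fin.cons_zero]
        rw [hMv, map_smul, inner_smul_right, hvJ, mul_zero]
      · simp only [Fin.cons_zero, Fin.cons_succ]
        have h := hJ1 v (M (u j))
        rw [hJM0 _ (u j).2] at h
        exact neg_eq_zero.1 h.symm
      · simp only [Fin.cons_zero, Fin.cons_succ]
        rw [hMv, map_smul, inner_smul_right, hxJv _ (u i).2, mul_zero]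
      · simp only [Fin.cons_succ]
        rw [← hPJ _ (u i).2]
        exact hu5 i j

theorem aux_inner {m : Type} [Fintype m] [DecidableEq m] (A : Matrix m m ℂ)
    (x y : EuclideanSpace ℂ m) :
    inner ℂ (Matrix.toEuclideanLin A x) y = inner ℂ x (Matrix.toEuclideanLin Aᴴ y) := by
  rw [Matrix.toEuclideanLin_conjTranspose_eq_adjoint, LinearMap.adjoint_inner_right]

theorem aux_entry {m k : Type} [Fintype m] [DecidableEq m] (A : Matrix m m ℂ)
    (u : k → EuclideanSpace ℂ m) (i j : k) :
    ((Matrix.of fun a b => u b a)ᴴ * A * (Matrix.of fun a b => u b a)) i j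
      = inner ℂ (u i) (Matrix.toEuclideanLin A (u j)) := by
  rw [Matrix.mul_assoc, EuclideanSpace.inner_eq_star_dotProduct, dotProduct_comm]
  rfl

theorem schur_hamiltonian_decomposition (n : ℕ)
    (J M : Matrix (Fin n ⊕ Fin n) (Fin n ⊕ Fin n) ℂ)
    (hJ : J = Matrix.fromBlocks 0 1 (-1) 0)
    (hM : (J * M)ᴴ = J * M)
    (hspec : ∀ lam ∈ spectrum ℂ M, lam.re ≠ 0) :
    ∃ (Q : Matrix (Fin n ⊕ Fin n) (Fin n ⊕ Fin n) ℂ) (T R : Matrix (Fin n) (Fin n) ℂ),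
      Qᴴ * Q = 1 ∧ Qᴴ * J * Q = J ∧
      (∀ i j : Fin n, j < i → T i j = 0) ∧
      (∀ lam ∈ spectrum ℂ T, lam.re < 0) ∧
      Rᴴ = R ∧
      Qᴴ * M * Q = Matrix.fromBlocks T R 0 (-Tᴴ) := by
  have hJH : Jᴴ = -J := by
    rw [hJ, fromBlocks_conjTranspose, fromBlocks_neg]; simp
  have hJJ : J * J = -1 := by
    rw [hJ, fromBlocks_multiply, ← fromBlocks_one, fromBlocks_neg]; simp
  have hmul : ∀ (A B : Matrix (Fin n ⊕ Fin n) (Fin n ⊕ Fin n) ℂ) x,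
      toEuclideanLin A (toEuclideanLin B x) = toEuclideanLin (A * B) x := by
    intro A B x
    simp [Matrix.toLpLin_apply]
  have hMH : Mᴴ = J * M * J := by
    have h := hM
    rw [conjTranspose_mul, hJH, Matrix.mul_neg] at h
    rw [← h, Matrix.neg_mul, Matrix.mul_assoc, hJJ]; simp
  obtain ⟨u, h1, h2, h3, h4, h5⟩ := aux_main n (toEuclideanLin J) (toEuclideanLin M)
    (by simp; ring)
    (by intro x y; rw [aux_inner, hJH]; simp)
    (by intro x; rw [hmul, hJJ]; simp)
    (by intro x y; rw [hmul, aux_inner, hM, hmul])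
    (by
      intro μ v hv hMv
      apply hspec
      rw [← Matrix.spectrum_toEuclideanLin]
      exact (Module.End.hasEigenvalue_of_hasEigenvector
        ⟨Module.End.mem_eigenspace_iff.2 hMv, hv⟩).mem_spectrum)
  set U : Matrix (Fin n ⊕ Fin n) (Fin n) ℂ := Matrix.of fun a b => u b a with hU
  have hUU : Uᴴ * U = 1 := by
    ext i j
    have := aux_entry 1 u i j
    rw [Matrix.mul_one] at this
    rw [this, Matrix.one_apply, ← h1]
    simp
  have hUJU : Uᴴ * J * U = 0 := by
    ext i j
    rw [aux_entry, h2]; rfl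
  have hUJMU : Uᴴ * (J * M) * U = 0 := by
    ext i j
    rw [aux_entry, ← hmul, h5]; rfl
  have htri : ∀ i j : Fin n, j < i → (Uᴴ * M * U) i j = 0 := by
    intro i j hij
    rw [aux_entry, h3 i j hij]
  have hQH : (fromCols U (-(J * U)))ᴴ = fromRows Uᴴ (Uᴴ * J) := by
    rw [conjTranspose_fromCols_eq_fromRows_conjTranspose, conjTranspose_neg, conjTranspose_mul, hJH]
    simp
  refine ⟨fromCols U (-(J * U)), Uᴴ * M * U, -(Uᴴ * (M * J) * U), ?_, ?_, htri, ?_, ?_, ?_⟩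
  · rw [hQH, fromRows_mul_fromCols, ← fromBlocks_one]
    refine fromBlocks_inj.2 ⟨hUU, ?_, hUJU, ?_⟩
    · rw [Matrix.mul_neg, ← Matrix.mul_assoc, hUJU, neg_zero]
    · rw [Matrix.mul_neg, Matrix.mul_assoc, ← Matrix.mul_assoc J, hJJ]; simp [hUU]
  · rw [hQH, fromRows_mul, fromRows_mul_fromCols]
    conv_rhs => rw [hJ]
    refine fromBlocks_inj.2 ⟨hUJU, ?_, ?_, ?_⟩
    · rw [Matrix.mul_neg, Matrix.mul_assoc, ← Matrix.mul_assoc J, hJJ]; simp [hUU]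
    · rw [Matrix.mul_assoc Uᴴ, hJJ]; simp [hUU]
    · rw [Matrix.mul_assoc Uᴴ, hJJ, Matrix.mul_neg, ← Matrix.mul_assoc]; simp [hUJU]
  · intro lam hlam
    have hdet : (algebraMap ℂ (Matrix (Fin n) (Fin n) ℂ) lam - Uᴴ * M * U).det = 0 := by
      by_contra h
      exact hlam ((Matrix.isUnit_iff_isUnit_det _).2 (isUnit_iff_ne_zero.2 h))
    rw [Matrix.det_of_upperTriangular, Finset.prod_eq_zero_iff] at hdet
    · obtain ⟨i, -, hi⟩ := hdet
      rw [Matrix.sub_apply, Matrix.algebraMap_matrix_apply, if_pos rfl, sub_eq_zero] at hi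
      have hi' : lam = (Uᴴ * M * U) i i := hi
      rw [hi', aux_entry]
      exact h4 i
    · intro i j hij
      have hij' : j < i := hij
      rw [Matrix.sub_apply, Matrix.algebraMap_matrix_apply, if_neg hij'.ne', htri i j hij', sub_zero]
  · have : (M * J)ᴴ = M * J := by
      rw [conjTranspose_mul, hJH, hMH, Matrix.mul_assoc J, Matrix.neg_mul, ← Matrix.mul_assoc J, hJJ]
      simp
    rw [conjTranspose_neg, conjTranspose_mul, conjTranspose_mul, this, conjTranspose_conjTranspose]
    simp only [Matrix.mul_assoc]
  · rw [hQH, fromRows_mul, fromRows_mul_fromCols]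
    refine fromBlocks_inj.2 ⟨rfl, ?_, ?_, ?_⟩
    · simp only [Matrix.mul_neg, Matrix.mul_assoc]
    · rw [Matrix.mul_assoc Uᴴ, hUJMU]
    · rw [conjTranspose_mul, conjTranspose_mul, hMH, conjTranspose_conjTranspose]
      simp only [Matrix.mul_neg, Matrix.mul_assoc]
end

section
/- (Symplectic SVD) Let n be a finite type, J = Matrix.fromBlocks 0 1 (-1) 0 : Matrix (n ⊕ n) (n ⊕ n) ℂ, and let Q : Matrix (n ⊕ n) (n ⊕ n) ℂ be unitary (Qᴴ * Q = 1) and symplectic (Qᴴ * J * Q = J). Then there exist unitary matrices U V : Matrix n n ℂ and diagonal matrices S D : Matrix n n ℂ whose entries are real, with 0 ≤ S i i ≤ 1 and (S i i)^2 + (D i i)^2 = 1 for every i, such that (Matrix.fromBlocks Uᴴ 0 0 Uᴴ) * Q * (Matrix.fromBlocks V 0 0 V) = Matrix.fromBlocks S D (-D) S. -/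
open Matrix

open scoped Matrix.Norms.L2Operator in
lemma aux_exists_log {n : Type*} [Fintype n] [DecidableEq n] (T : Matrix n n ℂ)
    (hT : T ∈ unitary (Matrix n n ℂ)) :
    ∃ H : Matrix n n ℂ, H.IsHermitian ∧ NormedSpace.exp (Complex.I • H) = T := by
  have hfin : (spectrum ℂ T).Finite := Module.End.finite_spectrum (Matrix.toLin' T) |>.subset
    (by rw [Matrix.spectrum_toLin'])
  have hn : IsStarNormal T := ⟨by
    have := Unitary.mem_iff.1 hT
    exact this.1.trans this.2.symm⟩
  have hc : ∀ f : ℂ → ℂ, ContinuousOn f (spectrum ℂ T) := fun f => hfin.continuousOn f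
  refine ⟨cfc (fun z => (Complex.arg z : ℂ)) T, ?_, ?_⟩
  · change star _ = _
    rw [← cfc_star]
    simp
  · rw [← cfc_smul Complex.I _ T (hc _), ← CFC.exp_eq_normedSpace_exp (𝕜 := ℂ) (cfc_predicate _ _),
      ← cfc_comp' _ _ T (Set.Finite.continuousOn (hfin.image _) _) (hc _)]
    conv_rhs => rw [← cfc_id ℂ T]
    refine cfc_congr fun z hz => ?_
    have h1 : ‖z‖ = 1 := spectrum.norm_eq_one_of_unitary hT hz
    have := Complex.norm_mul_exp_arg_mul_I z
    rw [h1] at this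
    simpa [← Complex.exp_eq_exp_ℂ, mul_comm] using this

lemma aux_diag {n : Type*} [Fintype n] [DecidableEq n] (T : Matrix n n ℂ)
    (hT : T ∈ unitary (Matrix n n ℂ)) :
    ∃ (U : Matrix n n ℂ) (h : n → ℝ), Uᴴ * U = 1 ∧
      T = U * diagonal (fun i => Complex.exp (Complex.I * h i)) * Uᴴ := by
  obtain ⟨H, hH, rfl⟩ := aux_exists_log T hT
  have hU := Unitary.mem_iff.1 hH.eigenvectorUnitary.2
  have hs := hH.spectral_theorem
  rw [Unitary.conjStarAlgAut_apply] at hs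
  set U : Matrix n n ℂ := hH.eigenvectorUnitary.1 with hUdef
  refine ⟨U, hH.eigenvalues, hU.1, ?_⟩
  have hinv : U⁻¹ = Uᴴ := Matrix.inv_eq_left_inv hU.1
  have hu : IsUnit U := IsUnit.of_mul_eq_one _ hU.2
  have e : Complex.I • H = U * diagonal (fun i => Complex.I * hH.eigenvalues i) * U⁻¹ := by
    rw [hinv]
    conv_lhs => rw [hs]
    rw [← Matrix.smul_mul, ← Matrix.mul_smul, ← Matrix.diagonal_smul]
    rfl
  rw [e, Matrix.exp_conj _ _ hu, Matrix.exp_diagonal, hinv]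
  congr 3
  ext i
  rw [Pi.coe_exp, ← Complex.exp_eq_exp_ℂ]

lemma aux_sqrt (h : ℝ) : ∃ c s : ℝ, 0 ≤ c ∧ c ≤ 1 ∧ c ^ 2 + s ^ 2 = 1 ∧
    ((c : ℂ) + Complex.I * s) ^ 2 = Complex.exp (Complex.I * h) := by
  have key : ((Real.cos (h/2) : ℂ) + Complex.I * (Real.sin (h/2) : ℝ)) ^ 2
      = Complex.exp (Complex.I * h) := by
    have : (Real.cos (h/2) : ℂ) + Complex.I * (Real.sin (h/2) : ℝ)
        = Complex.exp (((h/2 : ℝ) : ℂ) * Complex.I) := by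
      rw [Complex.exp_mul_I]; push_cast; ring
    rw [this, ← Complex.exp_nat_mul]
    congr 1; push_cast; ring
  rcases le_total 0 (Real.cos (h/2)) with h0 | h0
  · exact ⟨_, _, h0, Real.cos_le_one _, Real.cos_sq_add_sin_sq _, key⟩
  · refine ⟨-Real.cos (h/2), -Real.sin (h/2), by linarith, by linarith [Real.neg_one_le_cos (h/2)],
      by linarith [Real.cos_sq_add_sin_sq (h/2)], ?_⟩
    rw [← key]; push_cast; ring

theorem symplectic_svd {n : Type*} [Fintype n] [DecidableEq n]
    (J Q : Matrix (n ⊕ n) (n ⊕ n) ℂ)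
    (hJ : J = Matrix.fromBlocks 0 1 (-1) 0)
    (hQu : Qᴴ * Q = 1) (hQs : Qᴴ * J * Q = J) :
    ∃ (U V S D : Matrix n n ℂ),
      Uᴴ * U = 1 ∧ Vᴴ * V = 1 ∧
      (∀ i j : n, i ≠ j → S i j = 0) ∧ (∀ i j : n, i ≠ j → D i j = 0) ∧
      (∀ i j : n, (S i j).im = 0) ∧ (∀ i j : n, (D i j).im = 0) ∧
      (∀ i : n, 0 ≤ (S i i).re ∧ (S i i).re ≤ 1) ∧
      (∀ i : n, (S i i) ^ 2 + (D i i) ^ 2 = 1) ∧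
      Matrix.fromBlocks Uᴴ 0 0 Uᴴ * Q * Matrix.fromBlocks V 0 0 V =
        Matrix.fromBlocks S D (-D) S := by
  have hQu' : Q * Qᴴ = 1 := mul_eq_one_comm.1 hQu
  have hcomm : J * Q = Q * J := by
    calc J * Q = (Q * Qᴴ) * J * Q := by rw [hQu', Matrix.one_mul]
      _ = Q * (Qᴴ * J * Q) := by simp only [Matrix.mul_assoc]
      _ = _ := by rw [hQs]
  obtain ⟨A, B, C, E, rfl⟩ : ∃ A B C E, Q = Matrix.fromBlocks A B C E :=
    ⟨_, _, _, _, (Matrix.fromBlocks_toBlocks Q).symm⟩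
  subst hJ
  simp only [Matrix.fromBlocks_multiply, Matrix.fromBlocks_inj] at hcomm
  obtain ⟨h1, h2, -, -⟩ := hcomm
  have hC : C = -B := by simpa using h1
  have hE : E = A := by simpa using h2
  subst hC hE
  rw [Matrix.fromBlocks_conjTranspose, Matrix.fromBlocks_multiply, ← Matrix.fromBlocks_one,
    Matrix.fromBlocks_inj] at hQu'
  obtain ⟨u1, u2, -, -⟩ := hQu'
  obtain ⟨W, hW⟩ : ∃ W, W = E + Complex.I • B := ⟨_, rfl⟩
  obtain ⟨X, hX⟩ : ∃ X, X = E - Complex.I • B := ⟨_, rfl⟩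
  have hI : Complex.I * Complex.I = -1 := Complex.I_mul_I
  have hWu : W * Wᴴ = 1 := by
    have u3 := congrArg (fun M => Complex.I • M) u2
    simp only [conjTranspose_neg, Matrix.mul_neg, Matrix.neg_mul, smul_add, smul_neg, smul_zero] at u3
    rw [hW, ← u1]
    simp only [conjTranspose_add, conjTranspose_smul, Complex.star_def, Complex.conj_I,
      Matrix.add_mul, Matrix.mul_add, Matrix.smul_mul, Matrix.mul_smul, smul_smul, neg_smul, hI,
      mul_neg, neg_neg, one_smul, smul_neg, smul_add, smul_sub]
    rw [← sub_eq_zero, ← u3]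
    abel
  have hXu : X * Xᴴ = 1 := by
    have u3 := congrArg (fun M => -(Complex.I • M)) u2
    simp only [conjTranspose_neg, Matrix.mul_neg, Matrix.neg_mul, smul_add, smul_neg, smul_zero,
      neg_zero] at u3
    rw [hX, ← u1]
    simp only [conjTranspose_sub, conjTranspose_smul, Complex.star_def, Complex.conj_I,
      Matrix.sub_mul, Matrix.mul_sub, Matrix.smul_mul, Matrix.mul_smul, smul_smul, neg_smul, hI,
      mul_neg, neg_neg, one_smul, smul_neg, smul_add, smul_sub]
    rw [← sub_eq_zero, ← u3]
    abel
  have hWu' := mul_eq_one_comm.1 hWu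
  have hXu' := mul_eq_one_comm.1 hXu
  have hT : W * Xᴴ ∈ unitary (Matrix n n ℂ) := by
    rw [Unitary.mem_iff]
    simp only [star_eq_conjTranspose, conjTranspose_mul, conjTranspose_conjTranspose]
    constructor
    · rw [Matrix.mul_assoc, ← Matrix.mul_assoc Wᴴ, hWu', Matrix.one_mul, hXu]
    · rw [Matrix.mul_assoc, ← Matrix.mul_assoc Xᴴ, hXu', Matrix.one_mul, hWu]
  obtain ⟨U, h, hU, hTU⟩ := aux_diag _ hT
  choose c s hc0 hc1 hcs hsq using fun i => aux_sqrt (h i)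
  have hU' := mul_eq_one_comm.1 hU
  obtain ⟨L, hL⟩ : ∃ L : Matrix n n ℂ, L = diagonal (fun i => (c i : ℂ) + Complex.I * s i) :=
    ⟨_, rfl⟩
  obtain ⟨K, hK⟩ : ∃ K : Matrix n n ℂ, K = diagonal (fun i => (c i : ℂ) - Complex.I * s i) :=
    ⟨_, rfl⟩
  have hcs' : ∀ i, (c i : ℂ) ^ 2 + (s i : ℂ) ^ 2 = 1 := fun i => by exact_mod_cast hcs i
  have hLK : L * K = 1 := by
    rw [hL, hK, diagonal_mul_diagonal, ← diagonal_one]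
    congr 1; ext i
    linear_combination hcs' i - (s i : ℂ)^2 * hI
  have hKL : Kᴴ = L := by
    rw [hL, hK, diagonal_conjTranspose]
    congr 1; ext i
    simp
  have hLL : diagonal (fun i => Complex.exp (Complex.I * h i)) = L * L := by
    rw [hL, diagonal_mul_diagonal]
    congr 1; ext i
    rw [← hsq, sq]
  rw [hLL] at hTU
  have hV1 : Uᴴ * X * (Xᴴ * U * K) = K := by
    calc _ = Uᴴ * (X * Xᴴ) * U * K := by simp only [Matrix.mul_assoc]
      _ = K := by rw [hXu, Matrix.mul_one, hU, Matrix.one_mul]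
  have hV2 : Uᴴ * W * (Xᴴ * U * K) = L := by
    calc _ = Uᴴ * (W * Xᴴ) * U * K := by simp only [Matrix.mul_assoc]
      _ = (Uᴴ * U) * L * (L * ((Uᴴ * U) * K)) := by rw [hTU]; simp only [Matrix.mul_assoc]
      _ = L := by rw [hU, Matrix.one_mul, Matrix.one_mul, hLK, Matrix.mul_one]
  have hEE : E = (1/2 : ℂ) • (W + X) := by
    rw [hW, hX]; ext i j; simp; ring
  have hBB : B = (-Complex.I/2 : ℂ) • (W - X) := by
    rw [hW, hX]; ext i j; simp; linear_combination (B i j) * hI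
  have hS : Uᴴ * E * (Xᴴ * U * K) = diagonal (fun i => (c i : ℂ)) := by
    rw [hEE, Matrix.mul_smul, Matrix.smul_mul, Matrix.mul_add, Matrix.add_mul, hV1, hV2, hL, hK,
      diagonal_add, ← diagonal_smul]
    congr 1; ext i; simp; ring
  have hD : Uᴴ * B * (Xᴴ * U * K) = diagonal (fun i => (s i : ℂ)) := by
    rw [hBB, Matrix.mul_smul, Matrix.smul_mul, Matrix.mul_sub, Matrix.sub_mul, hV1, hV2, hL, hK,
      diagonal_sub, ← diagonal_smul]
    congr 1; ext i; simp; linear_combination (-(s i : ℂ)) * hI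
  refine ⟨U, Xᴴ * U * K, diagonal (fun i => (c i : ℂ)), diagonal (fun i => (s i : ℂ)), hU, ?_,
    fun i j hij => diagonal_apply_ne _ hij, fun i j hij => diagonal_apply_ne _ hij, ?_, ?_, ?_, ?_,
    ?_⟩
  · simp only [conjTranspose_mul, conjTranspose_conjTranspose, hKL]
    calc _ = L * (Uᴴ * X * (Xᴴ * U * K)) := by simp only [Matrix.mul_assoc]
      _ = 1 := by rw [hV1, hLK]
  · intro i j
    rw [diagonal_apply]; split_ifs <;> simp
  · intro i j
    rw [diagonal_apply]; split_ifs <;> simp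
  · intro i
    simpa using ⟨hc0 i, hc1 i⟩
  · intro i
    simpa using hcs' i
  · rw [Matrix.fromBlocks_multiply, Matrix.fromBlocks_multiply]
    simp only [Matrix.mul_zero, Matrix.zero_mul, neg_zero, add_zero, zero_add, Matrix.mul_neg, Matrix.neg_mul,
      hS, hD]
end

section
/- Let n and p be finite types, A : Matrix n n ℂ and B : Matrix p p ℂ. Then spectrum ℂ ((1 : Matrix p p ℂ) ⊗ₖ A - Bᵀ ⊗ₖ (1 : Matrix n n ℂ)) = { λ - μ | λ ∈ spectrum ℂ A, μ ∈ spectrum ℂ B } (i.e., it equals Set.image2 (· - ·) (spectrum ℂ A) (spectrum ℂ B)). -/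
open Matrix
open scoped Kronecker

theorem aux_right {n : Type*} [Fintype n] [DecidableEq n] (M : Matrix n n ℂ) (z : ℂ) :
    z ∈ spectrum ℂ M ↔ ∃ v ≠ 0, M *ᵥ v = z • v := by
  rw [spectrum.mem_iff, Matrix.isUnit_iff_isUnit_det, isUnit_iff_ne_zero, not_not,
    ← Matrix.exists_mulVec_eq_zero_iff]
  simp only [Matrix.sub_mulVec, Algebra.algebraMap_eq_smul_one, Matrix.smul_mulVec,
    Matrix.one_mulVec, sub_eq_zero, eq_comm]

theorem aux_left {n : Type*} [Fintype n] [DecidableEq n] (M : Matrix n n ℂ) (z : ℂ) :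
    z ∈ spectrum ℂ M ↔ ∃ v ≠ 0, v ᵥ* M = z • v := by
  rw [spectrum.mem_iff, Matrix.isUnit_iff_isUnit_det, isUnit_iff_ne_zero, not_not,
    ← Matrix.exists_vecMul_eq_zero_iff]
  simp only [Matrix.vecMul_sub, Algebra.algebraMap_eq_smul_one, Matrix.vecMul_smul,
    Matrix.vecMul_one, sub_eq_zero, eq_comm]

theorem aux_vec {n p : Type*}
    [Fintype n] [DecidableEq n] [Fintype p] [DecidableEq p]
    (A : Matrix n n ℂ) (B : Matrix p p ℂ) (z : ℂ) :
    z ∈ spectrum ℂ ((1 : Matrix p p ℂ) ⊗ₖ A - Bᵀ ⊗ₖ (1 : Matrix n n ℂ)) ↔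
      ∃ X : Matrix n p ℂ, X ≠ 0 ∧ A * X - X * B = z • X := by
  have key : ∀ X : Matrix n p ℂ, ((1 : Matrix p p ℂ) ⊗ₖ A - Bᵀ ⊗ₖ (1 : Matrix n n ℂ)) *ᵥ vec X
      = vec (A * X - X * B) := by
    intro X
    rw [Matrix.sub_mulVec, Matrix.kronecker_mulVec_vec, Matrix.kronecker_mulVec_vec]
    simp [vec_sub]
  rw [aux_right]
  constructor
  · rintro ⟨v, hv, h⟩
    have e : v = vec (Matrix.of fun i j => v (j, i)) := rfl
    refine ⟨Matrix.of fun i j => v (j, i), ?_, ?_⟩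
    · intro h0
      apply hv
      rw [e, h0]; rfl
    · rw [e, key] at h
      exact vec_inj.1 h
  · rintro ⟨X, hX, h⟩
    refine ⟨vec X, fun h0 => hX (vec_inj.1 h0), ?_⟩
    rw [key, h]; rfl

theorem aux_inter {n p : Type*}
    [Fintype n] [DecidableEq n] [Fintype p] [DecidableEq p]
    (A : Matrix n n ℂ) (B : Matrix p p ℂ) (X : Matrix n p ℂ) (h : A * X = X * B)
    (q : Polynomial ℂ) : Polynomial.aeval A q * X = X * Polynomial.aeval B q := by
  induction q using Polynomial.induction_on' with
  | add f g hf hg => simp [Matrix.add_mul, Matrix.mul_add, hf, hg]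
  | monomial k a =>
    have hk : A ^ k * X = X * B ^ k := by
      induction k with
      | zero => simp
      | succ k ih => rw [pow_succ, pow_succ', Matrix.mul_assoc, h, ← Matrix.mul_assoc, ih,
          Matrix.mul_assoc, ← pow_succ, ← pow_succ']
    simp [Polynomial.aeval_monomial, Algebra.algebraMap_eq_smul_one, hk]

theorem spectrum_kronecker_sum_diff {n p : Type*}
    [Fintype n] [DecidableEq n] [Fintype p] [DecidableEq p]
    (A : Matrix n n ℂ) (B : Matrix p p ℂ) :
    spectrum ℂ ((1 : Matrix p p ℂ) ⊗ₖ A - Bᵀ ⊗ₖ (1 : Matrix n n ℂ))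
      = Set.image2 (· - ·) (spectrum ℂ A) (spectrum ℂ B) := by
  ext z
  rw [aux_vec]
  constructor
  · rintro ⟨X, hX, h⟩
    have h1 : (A - z • 1) * X = X * B := by
      rw [Matrix.sub_mul, Matrix.smul_mul, Matrix.one_mul, ← h]; abel
    have h2 := aux_inter _ _ X h1 (A - z • 1).charpoly
    rw [Matrix.aeval_self_charpoly, Matrix.zero_mul] at h2
    have nu : ¬ IsUnit (Polynomial.aeval B (A - z • 1).charpoly) := by
      rintro ⟨u, hu⟩
      apply hX
      rw [← hu] at h2
      have : X * (u : Matrix p p ℂ) * ((u⁻¹ : (Matrix p p ℂ)ˣ) : Matrix p p ℂ) = X := by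
        rw [Matrix.mul_assoc, Units.mul_inv, Matrix.mul_one]
      rw [← this, ← h2, Matrix.zero_mul]
    have hs := (IsAlgClosed.splits (A - z • 1).charpoly).eq_prod_roots_of_monic
      (Matrix.charpoly_monic _)
    rw [hs] at nu
    obtain ⟨k, hk, hr⟩ := spectrum.exists_mem_of_not_isUnit_aeval_prod nu
    have hk2 : k ∈ spectrum ℂ (A - z • 1) :=
      Matrix.mem_spectrum_iff_isRoot_charpoly.2 hr
    refine ⟨k + z, ?_, k, hk, by simp⟩
    rw [aux_right] at hk2 ⊢
    obtain ⟨v, hv, e⟩ := hk2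
    refine ⟨v, hv, ?_⟩
    rw [Matrix.sub_mulVec, Matrix.smul_mulVec, Matrix.one_mulVec, sub_eq_iff_eq_add] at e
    rw [e, add_smul]
  · rintro ⟨a, ha, b, hb, rfl⟩
    obtain ⟨v, hv, hv'⟩ := (aux_right A a).1 ha
    obtain ⟨w, hw, hw'⟩ := (aux_left B b).1 hb
    refine ⟨vecMulVec v w, ?_, ?_⟩
    · obtain ⟨i, hi⟩ := Function.ne_iff.1 hv
      obtain ⟨j, hj⟩ := Function.ne_iff.1 hw
      intro h0
      have := congrFun (congrFun h0 i) j
      simp [vecMulVec_apply] at this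
      rcases this with h | h
      · exact hi h
      · exact hj h
    · rw [Matrix.mul_vecMulVec, Matrix.vecMulVec_mul, hv', hw']
      ext i j
      simp [vecMulVec_apply]; ring
end

section
/- Let n and p be finite types, A : Matrix n n ℂ and B : Matrix p p ℂ. The Sylvester equation A * X + X * B = K has a unique solution X : Matrix n p ℂ for every right-hand side K : Matrix n p ℂ if and only if A and -B have no common eigenvalue, i.e., (∀ K : Matrix n p ℂ, ∃! X : Matrix n p ℂ, A * X + X * B = K) ↔ spectrum ℂ A ∩ spectrum ℂ (-B) = ∅. -/
open Matrix

theorem aeval_intertwine_aux {n p : Type*}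
    [Fintype n] [DecidableEq n] [Fintype p] [DecidableEq p]
    (A : Matrix n n ℂ) (C : Matrix p p ℂ) (X : Matrix n p ℂ) (h : A * X = X * C)
    (f : Polynomial ℂ) : Polynomial.aeval A f * X = X * Polynomial.aeval C f := by
  induction f using Polynomial.induction_on' with
  | add f g hf hg => simp [Matrix.add_mul, Matrix.mul_add, hf, hg]
  | monomial k a =>
    have hk : A ^ k * X = X * C ^ k := by
      induction k with
      | zero => simp
      | succ k ih => rw [pow_succ, Matrix.mul_assoc, h, ← Matrix.mul_assoc, ih, Matrix.mul_assoc, pow_succ]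
    simp [Polynomial.aeval_monomial, Algebra.algebraMap_eq_smul_one, hk]

theorem sylvester_unique_solution_iff {n p : Type*}
    [Fintype n] [DecidableEq n] [Fintype p] [DecidableEq p]
    (A : Matrix n n ℂ) (B : Matrix p p ℂ) :
    (∀ K : Matrix n p ℂ, ∃! X : Matrix n p ℂ, A * X + X * B = K)
      ↔ spectrum ℂ A ∩ spectrum ℂ (-B) = ∅ := by
  constructor
  · intro h
    rw [Set.eq_empty_iff_forall_notMem]
    rintro μ ⟨hA, hB⟩
    rw [spectrum.mem_iff, Matrix.isUnit_iff_isUnit_det, isUnit_iff_ne_zero, not_not] at hA hB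
    obtain ⟨v, hv, hv'⟩ := Matrix.exists_mulVec_eq_zero_iff.mpr hA
    obtain ⟨w, hw, hw'⟩ := Matrix.exists_vecMul_eq_zero_iff.mpr hB
    have h1 : A *ᵥ v = μ • v := by
      rw [Matrix.sub_mulVec, Algebra.algebraMap_eq_smul_one, Matrix.smul_mulVec, Matrix.one_mulVec] at hv'
      exact (sub_eq_zero.mp hv').symm
    have h2 : w ᵥ* B = -(μ • w) := by
      rw [Matrix.vecMul_sub, Algebra.algebraMap_eq_smul_one, Matrix.vecMul_smul, Matrix.vecMul_one,
        Matrix.vecMul_neg, sub_neg_eq_add] at hw'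
      exact (neg_eq_of_add_eq_zero_right hw').symm
    have h0 : Matrix.vecMulVec v w = 0 := by
      refine (h 0).unique ?_ (by simp)
      rw [Matrix.mul_vecMulVec, Matrix.vecMulVec_mul, h1, h2]
      ext i j
      simp [Matrix.vecMulVec_apply]
    obtain ⟨i, hi⟩ := Function.ne_iff.mp hv
    obtain ⟨j, hj⟩ := Function.ne_iff.mp hw
    have := congrFun (congrFun h0 i) j
    simp [Matrix.vecMulVec_apply] at this
    simp_all
  · intro h
    let L : Matrix n p ℂ →ₗ[ℂ] Matrix n p ℂ :=
      { toFun := fun X => A * X + X * B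
        map_add' := fun X Y => by simp only [Matrix.mul_add, Matrix.add_mul]; abel
        map_smul' := fun c X => by simp }
    have hcop : IsCoprime A.charpoly (-B).charpoly := by
      rw [Polynomial.isCoprime_iff_aeval_ne_zero_of_isAlgClosed ℂ ℂ]
      intro a
      by_contra! hc
      have : a ∈ spectrum ℂ A ∩ spectrum ℂ (-B) := by
        constructor
        · exact Matrix.mem_spectrum_iff_isRoot_charpoly.mpr (by simpa using hc.1)
        · exact Matrix.mem_spectrum_iff_isRoot_charpoly.mpr (by simpa using hc.2)
      simp [h] at this
    have hinj : Function.Injective L := by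
      rw [injective_iff_map_eq_zero]
      intro X hX
      have hX' : A * X = X * (-B) := by
        rw [Matrix.mul_neg]; exact eq_neg_of_add_eq_zero_left hX
      obtain ⟨u, v, huv⟩ := hcop
      have e := congrArg (fun f => Polynomial.aeval A f * X) huv
      simp only [map_add, map_mul, map_one, Matrix.add_mul, Matrix.one_mul,
        Matrix.aeval_self_charpoly, mul_zero, Matrix.zero_mul, zero_add] at e
      rw [← map_mul, aeval_intertwine_aux A (-B) X hX', map_mul, Matrix.aeval_self_charpoly] at e
      simpa using e.symm
    have hbij : Function.Bijective L := ⟨hinj, LinearMap.injective_iff_surjective.mp hinj⟩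
    exact fun K => hbij.existsUnique K
end

section
/- Let n be a finite type, A : Matrix n n ℂ stable (every λ ∈ spectrum ℂ A satisfies Re λ < 0), and Q : Matrix n n ℂ positive semidefinite. Then the Lyapunov equation Aᴴ * E + E * A + Q = 0 has a unique solution E : Matrix n n ℂ, and this unique solution is positive semidefinite. -/
open Matrix
open scoped ComplexOrder

theorem lyap_pow_tendsto {R : Type*} [NormedRing R] [NormedAlgebra ℂ R] [CompleteSpace R]
    (a : R) (h : ∀ z ∈ spectrum ℂ a, ‖z‖ < 1) :
    Filter.Tendsto (fun k : ℕ => a ^ k) Filter.atTop (nhds 0) := by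
  rcases subsingleton_or_nontrivial R with hs | hs
  · have : (fun k : ℕ => a ^ k) = fun _ => 0 := by
      funext k; exact Subsingleton.elim _ _
    rw [this]; exact tendsto_const_nhds
  have hr : spectralRadius ℂ a < ((1 : NNReal) : ENNReal) :=
    spectrum.spectralRadius_lt_of_forall_lt a (fun k hk => by
      have := h k hk
      exact_mod_cast this)
  obtain ⟨r, hr1, hr2⟩ := ENNReal.lt_iff_exists_nnreal_btwn.mp hr
  have hr2' : r < 1 := by exact_mod_cast hr2
  have hev := (spectrum.pow_nnnorm_pow_one_div_tendsto_nhds_spectralRadius a).eventually_lt_const hr1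
  have hb : ∀ᶠ k : ℕ in Filter.atTop, ‖a ^ k‖ ≤ (r : ℝ) ^ k := by
    filter_upwards [hev, Filter.eventually_gt_atTop 0] with k hk hk0
    have hk1 : (0 : ℝ) < k := by exact_mod_cast hk0
    have h2 := ENNReal.rpow_le_rpow hk.le hk1.le
    rw [← ENNReal.rpow_mul, one_div_mul_cancel hk1.ne', ENNReal.rpow_one,
      ENNReal.rpow_natCast] at h2
    have h3 : ‖a ^ k‖₊ ≤ r ^ k := by exact_mod_cast h2
    exact_mod_cast h3
  exact squeeze_zero_norm' hb
    (tendsto_pow_atTop_nhds_zero_of_lt_one r.coe_nonneg (by exact_mod_cast hr2'))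

attribute [local instance] Matrix.linftyOpNormedRing Matrix.linftyOpNormedAlgebra in
theorem lyap_mat_pow_tendsto {n : Type*} [Fintype n] [DecidableEq n]
    (C : Matrix n n ℂ) (h : ∀ z ∈ spectrum ℂ C, ‖z‖ < 1) :
    Filter.Tendsto (fun k : ℕ => C ^ k) Filter.atTop (nhds 0) :=
  lyap_pow_tendsto C h

theorem lyap_spec {n : Type*} [Fintype n] [DecidableEq n]
    (A B : Matrix n n ℂ) (hA : ∀ lam ∈ spectrum ℂ A, lam.re < 0)
    (h1 : (A - 1) * B = 1) :
    ∀ z ∈ spectrum ℂ (1 + (2 : ℂ) • B), ‖z‖ < 1 := by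
  intro z hz
  by_contra hcon
  push Not at hcon
  have hB : IsUnit B := IsUnit.of_mul_eq_one_right _ h1
  have hAB : A * B = 1 + B := by
    rw [sub_mul, one_mul] at h1
    rw [← h1]; abel
  apply hz
  show IsUnit (algebraMap ℂ _ z - (1 + (2 : ℂ) • B))
  have key : algebraMap ℂ (Matrix n n ℂ) z - (1 + (2 : ℂ) • B)
      = ((z - 1) • A - (z + 1) • 1) * B := by
    rw [sub_mul, smul_mul_assoc, smul_mul_assoc, hAB, one_mul, Algebra.algebraMap_eq_smul_one]
    module
  rw [key]
  refine IsUnit.mul ?_ hB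
  by_cases hz1 : z = 1
  · subst hz1
    have : ((1 : ℂ) - 1) • A - ((1 : ℂ) + 1) • (1 : Matrix n n ℂ)
        = algebraMap ℂ _ (-2 : ℂ) := by
      rw [Algebra.algebraMap_eq_smul_one]; module
    rw [this]
    exact (IsUnit.mk0 (-2 : ℂ) (by norm_num)).map _
  · have hz2 : z - 1 ≠ 0 := sub_ne_zero.mpr hz1
    set w := (z + 1) / (z - 1) with hw
    have hns : w ∉ spectrum ℂ A := by
      intro hws
      have h2 := hA w hws
      have h3 : 1 ≤ Complex.normSq z := by
        rw [Complex.normSq_eq_norm_sq]; nlinarith [norm_nonneg z]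
      have h4 : 0 < Complex.normSq (z - 1) := Complex.normSq_pos.mpr hz2
      have h5 : w.re = (Complex.normSq z - 1) / Complex.normSq (z - 1) := by
        rw [hw, Complex.div_re, ← add_div]
        congr 1
        simp [Complex.normSq_apply]
        ring
      rw [h5] at h2
      have := div_nonneg (sub_nonneg.mpr h3) h4.le
      linarith
    have hu : IsUnit (algebraMap ℂ (Matrix n n ℂ) w - A) := by
      simpa [spectrum.mem_iff] using hns
    have e : (z - 1) • A - (z + 1) • (1 : Matrix n n ℂ)
        = algebraMap ℂ (Matrix n n ℂ) (-(z - 1)) * (algebraMap ℂ (Matrix n n ℂ) w - A) := by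
      have : z + 1 = (z - 1) * w := by rw [hw]; field_simp
      rw [this, Algebra.algebraMap_eq_smul_one, Algebra.algebraMap_eq_smul_one,
        smul_mul_assoc, one_mul]
      module
    rw [e]
    exact ((IsUnit.mk0 _ (neg_ne_zero.mpr hz2)).map _).mul hu

theorem lyap_stein {n : Type*} [Fintype n] [DecidableEq n]
    (A B F Q : Matrix n n ℂ) (h1 : (A - 1) * B = 1)
    (hF : Aᴴ * F + F * A + Q = 0) :
    F - (1 + (2 : ℂ) • B)ᴴ * F * (1 + (2 : ℂ) • B) = Bᴴ * ((2 : ℂ) • Q) * B := by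
  have hAB : A * B = 1 + B := by
    rw [sub_mul, one_mul] at h1
    rw [← h1]; abel
  have hBA : Bᴴ * Aᴴ = 1 + Bᴴ := by
    rw [← conjTranspose_mul, hAB, conjTranspose_add, conjTranspose_one]
  have hQ : Q = -(Aᴴ * F + F * A) := (neg_eq_of_add_eq_zero_right hF).symm
  have e : Bᴴ * (Aᴴ * F + F * A) * B = F * B + Bᴴ * F + (2 : ℂ) • (Bᴴ * F * B) := by
    have : Bᴴ * (Aᴴ * F + F * A) * B = (Bᴴ * Aᴴ) * F * B + Bᴴ * F * (A * B) := by
      noncomm_ring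
    rw [this, hBA, hAB, two_smul]
    noncomm_ring
  rw [hQ, mul_smul_comm, smul_mul_assoc, mul_neg, neg_mul, e]
  have h2 : (1 + (2 : ℂ) • B)ᴴ = 1 + (2 : ℂ) • Bᴴ := by
    simp [conjTranspose_add, conjTranspose_smul]
  rw [h2]
  simp only [add_mul, mul_add, one_mul, mul_one, smul_mul_assoc, mul_smul_comm]
  module

theorem lyap_tendsto {n : Type*} [Fintype n] [DecidableEq n]
    (C F : Matrix n n ℂ) (h : ∀ z ∈ spectrum ℂ C, ‖z‖ < 1) :
    Filter.Tendsto (fun k : ℕ => F - (C ^ k)ᴴ * F * C ^ k) Filter.atTop (nhds F) := by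
  have hc : Continuous (fun X : Matrix n n ℂ => F - Xᴴ * F * X) := by fun_prop
  have := (hc.tendsto 0).comp (lyap_mat_pow_tendsto C h)
  simpa [Function.comp_def] using this

theorem lyap_psd_iter {n : Type*} [Fintype n] [DecidableEq n]
    (C F : Matrix n n ℂ) (h : (F - Cᴴ * F * C).PosSemidef) (k : ℕ) :
    (F - (C ^ k)ᴴ * F * C ^ k).PosSemidef := by
  induction k with
  | zero => simpa using PosSemidef.zero
  | succ k ih =>
    have e : F - (C ^ (k + 1))ᴴ * F * C ^ (k + 1)
        = (F - (C ^ k)ᴴ * F * C ^ k) + (C ^ k)ᴴ * (F - Cᴴ * F * C) * C ^ k := by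
      rw [pow_succ', conjTranspose_mul]
      noncomm_ring
    rw [e]
    exact ih.add (h.conjTranspose_mul_mul_same _)

theorem lyap_psd {n : Type*} [Fintype n] [DecidableEq n]
    (A Q F : Matrix n n ℂ) (hA : ∀ lam ∈ spectrum ℂ A, lam.re < 0)
    (hQ : Q.PosSemidef) (hF : Aᴴ * F + F * A + Q = 0) : F.PosSemidef := by
  have hu : IsUnit (A - 1) := by
    by_contra hn
    have h1 : (1 : ℂ) ∈ spectrum ℂ A := by
      rw [spectrum.mem_iff, map_one, IsUnit.sub_iff]; exact hn
    have := hA 1 h1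
    norm_num at this
  obtain ⟨B, hB⟩ := hu.exists_right_inv
  have hS := lyap_stein A B F Q hB hF
  have ht := lyap_tendsto _ F (lyap_spec A B hA hB)
  have hp := lyap_psd_iter (1 + (2 : ℂ) • B) F (by
    rw [hS]
    exact (hQ.smul (by norm_num : (0 : ℂ) ≤ 2)).conjTranspose_mul_mul_same _)
  refine .of_dotProduct_mulVec_nonneg ?_ fun x => ?_
  · have hc : Continuous (fun X : Matrix n n ℂ => Xᴴ) := by fun_prop
    have h2 := (hc.tendsto F).comp ht
    refine tendsto_nhds_unique h2 (ht.congr fun k => ?_)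
    exact (hp k).1.symm
  · have hc : Continuous (fun X : Matrix n n ℂ => star x ⬝ᵥ (X *ᵥ x)) := by fun_prop
    exact ge_of_tendsto' ((hc.tendsto F).comp ht) fun k => (hp k).dotProduct_mulVec_nonneg x

theorem lyap_inj {n : Type*} [Fintype n] [DecidableEq n]
    (A F : Matrix n n ℂ) (hA : ∀ lam ∈ spectrum ℂ A, lam.re < 0)
    (hF : Aᴴ * F + F * A = 0) : F = 0 := by
  have h1 := lyap_psd A 0 F hA PosSemidef.zero (by simpa using hF)
  have h2 := lyap_psd A 0 (-F) hA PosSemidef.zero (by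
    rw [mul_neg, neg_mul, ← neg_add, hF]; simp)
  open scoped MatrixOrder in
  exact le_antisymm (by simpa using h2.nonneg) h1.nonneg

theorem lyapunov_unique_possemidef_solution {n : Type*} [Fintype n] [DecidableEq n]
    (A Q : Matrix n n ℂ)
    (hA : ∀ lam ∈ spectrum ℂ A, lam.re < 0)
    (hQ : Q.PosSemidef) :
    ∃ E : Matrix n n ℂ, E.PosSemidef ∧ Aᴴ * E + E * A + Q = 0 ∧
      ∀ F : Matrix n n ℂ, Aᴴ * F + F * A + Q = 0 → F = E := by
  let L : Matrix n n ℂ →ₗ[ℂ] Matrix n n ℂ :=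
    LinearMap.mulLeft ℂ Aᴴ + LinearMap.mulRight ℂ A
  have hL : ∀ X, L X = Aᴴ * X + X * A := fun X => rfl
  have hinj : Function.Injective L := by
    rw [injective_iff_map_eq_zero]
    intro X hX
    exact lyap_inj A X hA (by rw [← hL, hX])
  obtain ⟨E, hE⟩ := (LinearMap.injective_iff_surjective.mp hinj) (-Q)
  have hE' : Aᴴ * E + E * A + Q = 0 := by rw [← hL, hE]; simp
  refine ⟨E, lyap_psd A Q E hA hQ hE', hE', fun F hF => hinj ?_⟩
  rw [hE, hL]
  exact eq_neg_of_add_eq_zero_left hF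
end

section
/- Let n, m, p be finite types, γ > 0 a real number, A : Matrix n n ℂ stable (every λ ∈ spectrum ℂ A satisfies Re λ < 0), B : Matrix n m ℂ, C : Matrix p n ℂ, D : Matrix p m ℂ. Let G(s) = D + C * (s • (1 : Matrix n n ℂ) - A)⁻¹ * B for s ∈ ℂ, let R = (γ^2 : ℂ) • (1 : Matrix m m ℂ) - Dᴴ * D, and let M_γ : Matrix (n ⊕ n) (n ⊕ n) ℂ be the Hamiltonian matrix M_γ = Matrix.fromBlocks (A + B * R⁻¹ * Dᴴ * C) (B * R⁻¹ * Bᴴ) (-(Cᴴ * (1 + D * R⁻¹ * Dᴴ) * C)) (-(A + B * R⁻¹ * Dᴴ * C)ᴴ). Then (⨆ ω : ℝ, ‖G(Complex.I * ω)‖) < γ if and only if ‖D‖ < γ and M_γ has no purely imaginary eigenvalue (for every ω : ℝ, Complex.I * ω ∉ spectrum ℂ M_γ). Here ‖·‖ denotes the ℓ²→ℓ² operator norm of a complex matrix (i.e., its largest singular value); note that the hypothesis ‖D‖ < γ makes R invertible, and stability of A makes s • 1 - A invertible for purely imaginary s and the supremum finite. -/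
open Matrix
open scoped Matrix.Norms.L2Operator

lemma aux_det {n m p : Type*}
    [Fintype n] [DecidableEq n] [Fintype m] [DecidableEq m] [Fintype p] [DecidableEq p]
    (R : Matrix m m ℂ) (hR : IsUnit R.det) (hRh : Rᴴ = R)
    (A X : Matrix n n ℂ) (s : ℂ) (hs : star s = -s) (hX : (s • 1 - A) * X = 1)
    (B : Matrix n m ℂ) (C : Matrix p n ℂ) (D : Matrix p m ℂ) :
    s ∈ spectrum ℂ (Matrix.fromBlocks (A + B * R⁻¹ * Dᴴ * C) (B * R⁻¹ * Bᴴ)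
        (-(Cᴴ * (1 + D * R⁻¹ * Dᴴ) * C)) (-(A + B * R⁻¹ * Dᴴ * C)ᴴ)) ↔
    ¬ IsUnit (R + Dᴴ * D - (D + C * X * B)ᴴ * (D + C * X * B)).det := by
  have hX' : X * (s • 1 - A) = 1 := mul_eq_one_comm.mp hX
  have hXh : (s • 1 + Aᴴ) * (-Xᴴ) = 1 := by
    have := congrArg conjTranspose hX'
    simp only [conjTranspose_mul, conjTranspose_sub, conjTranspose_smul, conjTranspose_one, hs] at this
    have h2 : (s • 1 + Aᴴ) * (-Xᴴ) = (-s • 1 - Aᴴ) * Xᴴ := by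
      simp only [neg_smul, Matrix.mul_neg, ← Matrix.neg_mul, neg_add, sub_eq_add_neg]
    rw [h2, this]
  set P : Matrix (n ⊕ n) (n ⊕ n) ℂ := fromBlocks (s • 1 - A) 0 (Cᴴ * C) (s • 1 + Aᴴ) with hP
  set PI : Matrix (n ⊕ n) (n ⊕ n) ℂ := fromBlocks X 0 (Xᴴ * (Cᴴ * C) * X) (-Xᴴ) with hPI
  set Q : Matrix (n ⊕ n) m ℂ := fromRows B (-(Cᴴ * D)) with hQ
  set L : Matrix m (n ⊕ n) ℂ := fromCols (Dᴴ * C) Bᴴ with hL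
  have hPP : P * PI = 1 := by
    have h1 : (s • 1 + Aᴴ) * (Xᴴ * (Cᴴ * C) * X) = - (Cᴴ * C * X) := by
      have : (s • 1 + Aᴴ) * (Xᴴ * (Cᴴ * C) * X) = -(((s • 1 + Aᴴ) * (-Xᴴ)) * (Cᴴ * C) * X) := by
        simp only [Matrix.mul_neg, Matrix.neg_mul, Matrix.mul_assoc, neg_neg]
      rw [this, hXh, Matrix.one_mul]
    rw [hP, hPI, fromBlocks_multiply, h1, hX, hXh]
    simp [Matrix.mul_assoc]
  let _ : Invertible P := invertibleOfRightInverse P PI hPP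
  let _ : Invertible R := invertibleOfIsUnitDet R hR
  have hPi : ⅟P = PI := rfl
  have hRi : ⅟R = R⁻¹ := invOf_eq_nonsing_inv R
  have e1 := det_fromBlocks₁₁ P Q L R
  have e2 := det_fromBlocks₂₂ P Q L R
  rw [hPi] at e1
  rw [hRi] at e2
  have hRih : (R⁻¹)ᴴ = R⁻¹ := by rw [conjTranspose_nonsing_inv, hRh]
  have f1 : R - L * PI * Q = R + Dᴴ * D - (D + C * X * B)ᴴ * (D + C * X * B) := by
    rw [hL, hPI, hQ, fromCols_mul_fromBlocks, fromCols_mul_fromRows]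
    simp only [conjTranspose_add, conjTranspose_mul, Matrix.mul_add, Matrix.add_mul, Matrix.mul_assoc,
      Matrix.mul_neg, Matrix.neg_mul, Matrix.mul_zero, zero_add, neg_neg]
    abel
  have f2 : P - Q * R⁻¹ * L = algebraMap ℂ _ s - (Matrix.fromBlocks (A + B * R⁻¹ * Dᴴ * C) (B * R⁻¹ * Bᴴ)
        (-(Cᴴ * (1 + D * R⁻¹ * Dᴴ) * C)) (-(A + B * R⁻¹ * Dᴴ * C)ᴴ)) := by
    rw [Algebra.algebraMap_eq_smul_one, ← fromBlocks_one, fromBlocks_smul, hP, hQ, hL,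
      fromRows_mul, fromRows_mul_fromCols, sub_eq_add_neg _ (fromBlocks _ _ _ _), sub_eq_add_neg _ (fromBlocks _ _ _ _), fromBlocks_neg, fromBlocks_neg,
      fromBlocks_add, fromBlocks_add]
    simp only [conjTranspose_add, conjTranspose_mul, Matrix.mul_add, Matrix.add_mul, Matrix.mul_assoc,
      Matrix.mul_neg, Matrix.neg_mul, Matrix.mul_one, Matrix.one_mul, zero_add, neg_neg, hRih,
      conjTranspose_conjTranspose, smul_zero, neg_add]
    congr 1 <;> abel
  rw [f1] at e1
  rw [f2, e1] at e2
  have hPd : IsUnit P.det := isUnit_det_of_invertible P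
  rw [spectrum.mem_iff, isUnit_iff_isUnit_det]
  have := congrArg IsUnit e2
  rw [IsUnit.mul_iff, IsUnit.mul_iff, eq_iff_iff] at this
  tauto

lemma aux_sup (f : ℝ → ℝ) (hf : Continuous f) (d : ℝ)
    (ht : Filter.Tendsto f (Filter.cocompact ℝ) (nhds d)) (γ : ℝ) :
    ((⨆ w, f w) < γ → d < γ ∧ ∀ w, f w < γ) ∧ ((d < γ ∧ ∀ w, f w ≠ γ) → (⨆ w, f w) < γ) := by
  have key : ∀ c, d < c → ∃ K : Set ℝ, IsCompact K ∧ ∀ x, x ∉ K → f x < c := by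
    intro c hc
    have := ht.eventually (gt_mem_nhds hc)
    rw [Filter.Eventually, Filter.mem_cocompact] at this
    obtain ⟨K, hK, h⟩ := this
    exact ⟨K, hK, fun x hx => h hx⟩
  have hb : BddAbove (Set.range f) := by
    obtain ⟨K, hK, h⟩ := key (d+1) (by linarith)
    obtain ⟨b, hb⟩ := (hK.image hf).bddAbove
    refine ⟨max b (d+1), ?_⟩
    rintro _ ⟨x, rfl⟩
    by_cases hx : x ∈ K
    · exact le_max_of_le_left (hb ⟨x, hx, rfl⟩)
    · exact le_max_of_le_right (h x hx).le
  constructor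
  · intro h
    refine ⟨lt_of_le_of_lt (le_of_tendsto ht (Filter.Eventually.of_forall fun x => le_ciSup hb x)) h,
      fun w => lt_of_le_of_lt (le_ciSup hb w) h⟩
  · rintro ⟨hd, hne⟩
    have hlt : ∀ w, f w < γ := by
      intro w
      by_contra hw
      obtain ⟨K, hK, h⟩ := key γ hd
      obtain ⟨x, hx⟩ : ∃ x, x ∉ K := by
        by_contra hx
        push Not at hx
        exact noncompact_univ ℝ (by rwa [Set.eq_univ_of_forall hx] at hK)
      obtain ⟨y, hy⟩ := mem_range_of_exists_le_of_exists_ge hf ⟨x, (h x hx).le⟩ ⟨w, not_lt.mp hw⟩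
      exact hne y hy
    obtain ⟨c, hdc, hcγ⟩ := exists_between hd
    obtain ⟨K, hK, h⟩ := key c hdc
    have : ∃ b < γ, ∀ x ∈ K, f x ≤ b := by
      rcases K.eq_empty_or_nonempty with rfl | hne
      · exact ⟨c, hcγ, by simp⟩
      · obtain ⟨x, hx, hm⟩ := hK.exists_isMaxOn hne hf.continuousOn
        exact ⟨f x, hlt x, hm⟩
    obtain ⟨b, hbγ, hbK⟩ := this
    refine lt_of_le_of_lt (ciSup_le fun x => ?_) (max_lt hbγ hcγ)
    by_cases hx : x ∈ K
    · exact le_max_of_le_left (hbK x hx)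
    · exact le_max_of_le_right (h x hx).le


lemma aux_lt {m p : Type*} [Fintype m] [DecidableEq m] [Fintype p] [DecidableEq p]
    (γ : ℝ) (G : Matrix p m ℂ) (h : ‖G‖ < γ) :
    IsUnit ((γ ^ 2 : ℂ) • (1 : Matrix m m ℂ) - Gᴴ * G).det := by
  rw [← isUnit_iff_isUnit_det, ← Algebra.algebraMap_eq_smul_one]
  by_contra hn
  have hm : (γ ^ 2 : ℂ) ∈ spectrum ℂ (Gᴴ * G) := hn
  cases isEmpty_or_nonempty m
  · exact hn (isUnit_of_subsingleton _)
  have := spectrum.norm_le_norm_of_mem hm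
  rw [l2_opNorm_conjTranspose_mul_self] at this
  rw [norm_pow, Complex.norm_real, Real.norm_eq_abs, sq_abs] at this
  nlinarith [norm_nonneg G]

open scoped MatrixOrder ComplexOrder in
lemma aux_eq {m p : Type*} [Fintype m] [DecidableEq m] [Fintype p] [DecidableEq p]
    (γ : ℝ) (hγ : 0 < γ) (G : Matrix p m ℂ) (h : ‖G‖ = γ) :
    ¬ IsUnit ((γ ^ 2 : ℂ) • (1 : Matrix m m ℂ) - Gᴴ * G).det := by
  rw [← isUnit_iff_isUnit_det, ← Algebra.algebraMap_eq_smul_one]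
  cases isEmpty_or_nonempty m
  · have : G = 0 := by ext i j; exact isEmptyElim j
    rw [this, norm_zero] at h
    linarith
  have hp : (0 : Matrix m m ℂ) ≤ Gᴴ * G := (posSemidef_conjTranspose_mul_self G).nonneg
  have := CStarAlgebra.norm_mem_spectrum_of_nonneg (a := Gᴴ * G) hp
  rw [l2_opNorm_conjTranspose_mul_self, h] at this
  have := spectrum.algebraMap_mem ℂ this
  rw [spectrum.mem_iff] at this
  convert this using 4
  simp [sq]

theorem hinf_norm_lt_iff_hamiltonian {n m p : Type*}
    [Fintype n] [DecidableEq n] [Fintype m] [DecidableEq m] [Fintype p] [DecidableEq p]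
    (γ : ℝ) (hγ : 0 < γ)
    (A : Matrix n n ℂ) (hA : ∀ lam ∈ spectrum ℂ A, lam.re < 0)
    (B : Matrix n m ℂ) (C : Matrix p n ℂ) (D : Matrix p m ℂ) :
    let R : Matrix m m ℂ := (γ ^ 2 : ℂ) • (1 : Matrix m m ℂ) - Dᴴ * D
    let Mγ : Matrix (n ⊕ n) (n ⊕ n) ℂ :=
      Matrix.fromBlocks (A + B * R⁻¹ * Dᴴ * C) (B * R⁻¹ * Bᴴ)
        (-(Cᴴ * (1 + D * R⁻¹ * Dᴴ) * C)) (-(A + B * R⁻¹ * Dᴴ * C)ᴴ)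
    ((⨆ ω : ℝ, ‖D + C * ((Complex.I * (ω : ℂ)) • (1 : Matrix n n ℂ) - A)⁻¹ * B‖) < γ
      ↔ ‖D‖ < γ ∧ ∀ ω : ℝ, (Complex.I * (ω : ℂ)) ∉ spectrum ℂ Mγ) := by
  intro R Mγ
  have hres : ∀ ω : ℝ, (Complex.I * (ω : ℂ)) ∈ resolventSet ℂ A := by
    intro ω
    by_contra hn
    have := hA _ hn
    simp at this
  have hinv : ∀ s : ℂ, (s • (1 : Matrix n n ℂ) - A)⁻¹ = resolvent A s := by
    intro s
    rw [nonsing_inv_eq_ringInverse, resolvent, Algebra.algebraMap_eq_smul_one]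
  set f : ℝ → ℝ := fun ω => ‖D + C * ((Complex.I * (ω : ℂ)) • (1 : Matrix n n ℂ) - A)⁻¹ * B‖ with hf
  have hg : Continuous (fun X : Matrix n n ℂ => ‖D + C * X * B‖) := by fun_prop
  have hfc : Continuous f := by
    simp only [hf, hinv]
    refine hg.comp ?_
    rw [continuous_iff_continuousAt]
    intro ω
    have h1 := (spectrum.hasDerivAt_resolvent_const_left (hres ω)).continuousAt
    exact ContinuousAt.comp (f := fun ω : ℝ => Complex.I * (ω : ℂ)) h1 (by fun_prop)
  have hft : Filter.Tendsto f (Filter.cocompact ℝ) (nhds ‖D‖) := by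
    simp only [hf, hinv]
    have h1 : Filter.Tendsto (fun ω : ℝ => Complex.I * (ω : ℂ)) (Filter.cocompact ℝ)
        (Bornology.cobounded ℂ) := by
      rw [← Metric.cobounded_eq_cocompact, ← tendsto_norm_atTop_iff_cobounded]
      refine (tendsto_norm_cobounded_atTop (E := ℝ)).congr fun x => ?_
      simp
    have h2 := (spectrum.resolvent_tendsto_cobounded (𝕜 := ℂ) A).comp h1
    have h3 := (hg.tendsto 0).comp h2
    simpa [Function.comp_def] using h3
  have hRh : Rᴴ = R := by
    simp [R, conjTranspose_sub, conjTranspose_smul, conjTranspose_mul]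
  have hspec : ‖D‖ < γ → ∀ ω : ℝ, (Complex.I * (ω : ℂ)) ∈ spectrum ℂ Mγ ↔
      ¬ IsUnit ((γ ^ 2 : ℂ) • (1 : Matrix m m ℂ) -
        (D + C * ((Complex.I * (ω : ℂ)) • (1 : Matrix n n ℂ) - A)⁻¹ * B)ᴴ *
        (D + C * ((Complex.I * (ω : ℂ)) • (1 : Matrix n n ℂ) - A)⁻¹ * B)).det := by
    intro hD ω
    have hu : IsUnit ((Complex.I * (ω : ℂ)) • (1 : Matrix n n ℂ) - A).det := by
      rw [← isUnit_iff_isUnit_det, ← Algebra.algebraMap_eq_smul_one]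
      exact hres ω
    have h1 := aux_det R (aux_lt γ D hD) hRh A _ (Complex.I * (ω : ℂ)) (by simp)
      (mul_nonsing_inv _ hu) B C D
    have h2 : R + Dᴴ * D = (γ ^ 2 : ℂ) • (1 : Matrix m m ℂ) := by simp [R]
    rw [h2] at h1
    exact h1
  obtain ⟨k1, k2⟩ := aux_sup f hfc ‖D‖ hft γ
  constructor
  · intro h
    obtain ⟨hD, hlt⟩ := k1 h
    refine ⟨hD, fun ω hω => ?_⟩
    exact (hspec hD ω).mp hω (aux_lt γ _ (hlt ω))
  · rintro ⟨hD, hM⟩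
    refine k2 ⟨hD, fun ω hω => hM ω ?_⟩
    exact (hspec hD ω).mpr (aux_eq γ hγ _ hω)
end

section
/- Let n, m, p be finite types, A : Matrix n n ℂ, B : Matrix n m ℂ, C : Matrix p n ℂ. Assume (A, B) is stabilizable (for every λ ∈ ℂ with Re λ ≥ 0 and every y : n → ℂ, if Aᴴ *ᵥ y = λ • y and Bᴴ *ᵥ y = 0 then y = 0) and (C, A) is detectable (for every λ ∈ ℂ with Re λ ≥ 0 and every x : n → ℂ, if A *ᵥ x = λ • x and C *ᵥ x = 0 then x = 0). Let G = B * Bᴴ and K = Cᴴ * C. Then the Hamiltonian matrix M = Matrix.fromBlocks A G K (-Aᴴ) has no purely imaginary eigenvalue: for every λ ∈ spectrum ℂ M, Re λ ≠ 0. -/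
open Matrix

theorem hamiltonian_no_imaginary_eigen_of_stabilizable_detectable
    {n m p : Type*} [Fintype n] [DecidableEq n] [Fintype m] [Fintype p]
    (A : Matrix n n ℂ) (B : Matrix n m ℂ) (C : Matrix p n ℂ)
    (hstab : ∀ lam : ℂ, 0 ≤ lam.re → ∀ y : n → ℂ,
      Aᴴ *ᵥ y = lam • y → Bᴴ *ᵥ y = 0 → y = 0)
    (hdet : ∀ lam : ℂ, 0 ≤ lam.re → ∀ x : n → ℂ,
      A *ᵥ x = lam • x → C *ᵥ x = 0 → x = 0) :
    ∀ lam ∈ spectrum ℂ (Matrix.fromBlocks A (B * Bᴴ) (Cᴴ * C) (-Aᴴ)), lam.re ≠ 0 := by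
  intro lam hlam hre
  have hl : star lam = -lam := by
    apply Complex.ext <;> simp [hre]
  rw [← Matrix.spectrum_toLin', ← Module.End.hasEigenvalue_iff_mem_spectrum] at hlam
  obtain ⟨v, hv⟩ := hlam.exists_hasEigenvector
  have hv1 := hv.apply_eq_smul
  have hv0 := hv.2
  rw [Matrix.toLin'_apply, Matrix.fromBlocks_mulVec] at hv1
  obtain ⟨x, hx⟩ : ∃ x, x = v ∘ Sum.inl := ⟨_, rfl⟩
  obtain ⟨y, hy⟩ : ∃ y, y = v ∘ Sum.inr := ⟨_, rfl⟩
  rw [← hx, ← hy] at hv1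
  have e1 : A *ᵥ x + (B * Bᴴ) *ᵥ y = lam • x := by
    ext i
    simpa [hx] using congrFun hv1 (Sum.inl i)
  have e2 : (Cᴴ * C) *ᵥ x + (-Aᴴ) *ᵥ y = lam • y := by
    ext i
    simpa [hy] using congrFun hv1 (Sum.inr i)
  have f1 : star (A *ᵥ x) ⬝ᵥ y + star (Bᴴ *ᵥ y) ⬝ᵥ (Bᴴ *ᵥ y) = -lam * (star x ⬝ᵥ y) := by
    have := congrArg (fun z => star z ⬝ᵥ y) e1
    simp only [star_add, add_dotProduct, star_smul, hl, smul_dotProduct, smul_eq_mul] at this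
    rw [← this, ← Matrix.mulVec_mulVec, Matrix.star_mulVec B, Matrix.dotProduct_mulVec]
  have f2 : star (C *ᵥ x) ⬝ᵥ (C *ᵥ x) - star (A *ᵥ x) ⬝ᵥ y = lam * (star x ⬝ᵥ y) := by
    have := congrArg (fun z => star x ⬝ᵥ z) e2
    simp only [dotProduct_add, dotProduct_smul, smul_eq_mul, neg_mulVec, dotProduct_neg] at this
    rw [← this, ← Matrix.mulVec_mulVec, Matrix.star_mulVec C, Matrix.star_mulVec A,
      ← Matrix.dotProduct_mulVec, ← Matrix.dotProduct_mulVec]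
    ring
  have f3 : star (Bᴴ *ᵥ y) ⬝ᵥ (Bᴴ *ᵥ y) + star (C *ᵥ x) ⬝ᵥ (C *ᵥ x) = 0 := by
    linear_combination f1 + f2
  open scoped ComplexOrder in
  have f4 : Bᴴ *ᵥ y = 0 ∧ C *ᵥ x = 0 := by
    rw [add_eq_zero_iff_of_nonneg (dotProduct_star_self_nonneg _)
      (dotProduct_star_self_nonneg _)] at f3
    exact ⟨dotProduct_star_self_eq_zero.1 f3.1, dotProduct_star_self_eq_zero.1 f3.2⟩
  obtain ⟨hB, hC⟩ := f4
  rw [← Matrix.mulVec_mulVec, hB, mulVec_zero, add_zero] at e1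
  rw [← Matrix.mulVec_mulVec, hC, mulVec_zero, zero_add, neg_mulVec] at e2
  have hx0 := hdet lam hre.ge x e1 hC
  have hy0 := hstab (-lam) (by simp [hre]) y (by rw [neg_smul, ← e2, neg_neg]) hB
  apply hv0
  ext i
  rcases i with i | i
  · simpa [hx] using congrFun hx0 i
  · simpa [hy] using congrFun hy0 i
end

section
/- (Existence and uniqueness of the stabilizing positive semidefinite solution of the algebraic Riccati equation) Let n, m, p be finite types, A : Matrix n n ℂ, B : Matrix n m ℂ, C : Matrix p n ℂ. Assume (A, B) is stabilizable (for every λ ∈ ℂ with Re λ ≥ 0 and every y : n → ℂ, if Aᴴ *ᵥ y = λ • y and Bᴴ *ᵥ y = 0 then y = 0) and (C, A) is detectable (for every λ ∈ ℂ with Re λ ≥ 0 and every x : n → ℂ, if A *ᵥ x = λ • x and C *ᵥ x = 0 then x = 0). Let G = B * Bᴴ and K = Cᴴ * C. Then there exists a unique matrix E : Matrix n n ℂ such that E is positive semidefinite, Aᴴ * E + E * A - E * G * E + K = 0, and A - G * E is stable (every λ ∈ spectrum ℂ (A - G * E) satisfies Re λ < 0). -/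
open Matrix
open scoped ComplexOrder
open Polynomial

section helpers
variable {ι κ : Type*} [Fintype ι] [DecidableEq ι] [Fintype κ] [DecidableEq κ]

theorem ric_mem_spec {M : Matrix ι ι ℂ} {μ : ℂ} :
    μ ∈ spectrum ℂ M ↔ ∃ v, v ≠ 0 ∧ M *ᵥ v = μ • v := by
  rw [← Matrix.spectrum_toLin', ← Module.End.hasEigenvalue_iff_mem_spectrum]
  constructor
  · intro h
    obtain ⟨v, hv⟩ := h.exists_hasEigenvector
    exact ⟨v, hv.2, by simpa using hv.apply_eq_smul⟩
  · rintro ⟨v, hv, h⟩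
    exact Module.End.hasEigenvalue_of_hasEigenvector (x := v)
      (Module.End.hasEigenvector_iff.mpr ⟨Module.End.mem_eigenspace_iff.mpr (by simpa using h), hv⟩)

theorem ric_exists_eig (M : Matrix ι ι ℂ) (W : Submodule ℂ (ι → ℂ))
    (hW : ∀ v ∈ W, M *ᵥ v ∈ W) (hne : ∃ v ∈ W, v ≠ 0) :
    ∃ v ∈ W, v ≠ 0 ∧ ∃ μ : ℂ, M *ᵥ v = μ • v := by
  obtain ⟨v, hv, hv0⟩ := hne
  have : Nontrivial W := ⟨⟨⟨v, hv⟩, 0, by simpa [Subtype.ext_iff] using hv0⟩⟩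
  let f : Module.End ℂ W := (Matrix.toLin' M).restrict (by simpa using hW)
  obtain ⟨c, hc⟩ := Module.End.exists_eigenvalue f
  obtain ⟨w, hw⟩ := hc.exists_hasEigenvector
  refine ⟨w, w.2, by simpa using hw.2, c, ?_⟩
  have := congrArg Subtype.val hw.apply_eq_smul
  simpa [f] using this

theorem ric_aeval_eig {M : Matrix ι ι ℂ} {μ : ℂ} {v : ι → ℂ} (h : M *ᵥ v = μ • v) (q : ℂ[X]) :
    (aeval M q) *ᵥ v = q.eval μ • v := by
  induction q using Polynomial.induction_on' with
  | add p q hp hq => simp [add_mulVec, hp, hq, add_smul]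
  | monomial k a =>
    have : ∀ k : ℕ, (M ^ k) *ᵥ v = μ ^ k • v := by
      intro k
      induction k with
      | zero => simp
      | succ k ih => rw [pow_succ, ← mulVec_mulVec, h, mulVec_smul, ih, smul_smul, pow_succ']
    rw [aeval_monomial, eval_monomial, ← Algebra.smul_def, smul_mulVec, this, smul_smul]

theorem ric_intertwine {M : Matrix ι ι ℂ} {N : Matrix κ κ ℂ} {X : Matrix ι κ ℂ}
    (h : M * X = X * N) (q : ℂ[X]) : aeval M q * X = X * aeval N q := by
  induction q using Polynomial.induction_on' with
  | add p q hp hq => rw [map_add, map_add, Matrix.add_mul, Matrix.mul_add, hp, hq]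
  | monomial k a =>
    have : ∀ k : ℕ, (M ^ k) * X = X * N ^ k := by
      intro k
      induction k with
      | zero => simp
      | succ k ih => rw [pow_succ, Matrix.mul_assoc, h, ← Matrix.mul_assoc, ih, Matrix.mul_assoc, pow_succ]
    rw [aeval_monomial, aeval_monomial, ← Algebra.smul_def, ← Algebra.smul_def, Matrix.smul_mul,
      this, Matrix.mul_smul]

theorem ric_coprime {p q : ℂ[X]} (h : ∀ z, p.eval z = 0 → q.eval z = 0 → False) :
    IsCoprime p q := by
  rw [Polynomial.isCoprime_iff_aeval_ne_zero_of_isAlgClosed ℂ ℂ]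
  intro a
  by_contra! hc
  exact h a (by simpa using hc.1) (by simpa using hc.2)

theorem ric_sylvester {M : Matrix ι ι ℂ} {N : Matrix κ κ ℂ} {X : Matrix ι κ ℂ}
    (h : M * X = X * N) (hd : ∀ z, z ∈ spectrum ℂ M → z ∈ spectrum ℂ N → False) : X = 0 := by
  obtain ⟨a, b, hab⟩ := ric_coprime (p := M.charpoly) (q := N.charpoly) (by
    intro z h1 h2
    exact hd z (Matrix.mem_spectrum_iff_isRoot_charpoly.mpr h1)
      (Matrix.mem_spectrum_iff_isRoot_charpoly.mpr h2))
  have h1 := congrArg (fun q => aeval M q * X) hab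
  simp only [map_add, map_mul, Matrix.aeval_self_charpoly, mul_zero, zero_add, map_one,
    Matrix.one_mul] at h1
  rw [Matrix.mul_assoc, ric_intertwine h, Matrix.aeval_self_charpoly] at h1
  simpa using h1.symm

theorem ric_aeval_star (H : Matrix ι ι ℂ) (q : ℂ[X]) :
    (aeval H ((q.comp (-X)).map (starRingEnd ℂ)))ᴴ = aeval (-Hᴴ) q := by
  induction q using Polynomial.induction_on' with
  | add p q hp hq => simp [add_comp, hp, hq]
  | monomial k a =>
    rw [← C_mul_X_pow_eq_monomial]
    simp only [mul_comp, C_comp, pow_comp, X_comp, Polynomial.map_mul, map_C, Polynomial.map_pow,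
      Polynomial.map_neg, map_X, map_mul, aeval_C, map_pow, map_neg, aeval_X,
      conjTranspose_mul, conjTranspose_pow, conjTranspose_neg]
    rw [Algebra.algebraMap_eq_smul_one, Algebra.algebraMap_eq_smul_one]
    simp

theorem ric_iso {H J : Matrix ι ι ℂ} (hJ : J * H = -Hᴴ * J) {q : ℂ[X]}
    (hq : ∀ z w, q.eval z = 0 → q.eval w = 0 → z + star w ≠ 0) {v w : ι → ℂ}
    (hv : aeval H q *ᵥ v = 0) (hw : aeval H q *ᵥ w = 0) : star v ⬝ᵥ (J *ᵥ w) = 0 := by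
  set r := (q.comp (-X)).map (starRingEnd ℂ) with hr
  obtain ⟨a, b, hab⟩ := ric_coprime (p := q) (q := r) (by
    intro z h1 h2
    have h3 : q.eval (-(star z)) = 0 := by
      have : r.eval (star (star z)) = star ((q.comp (-X)).eval (star z)) := by
        rw [hr]; exact Polynomial.eval_map_apply (starRingEnd ℂ) (star z)
      rw [star_star, h2] at this
      simpa using this.symm
    exact hq z _ h1 h3 (by simp))
  have h1 := congrArg (fun q => aeval H q *ᵥ v) hab
  have hc : aeval H (a * q + b * r) = aeval H a * aeval H q + aeval H r * aeval H b := by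
    rw [map_add, map_mul, mul_comm b r, map_mul]
  simp only [hc, map_one, one_mulVec, add_mulVec, ← mulVec_mulVec, hv, mulVec_zero, zero_add] at h1
  rw [← h1, star_mulVec, ← dotProduct_mulVec, hr, ric_aeval_star, mulVec_mulVec,
    ric_intertwine hJ.symm, ← mulVec_mulVec, hw]
  simp

theorem ric_pow_tendsto (T : Matrix ι ι ℂ) (h : ∀ z ∈ spectrum ℂ T, ‖z‖ < 1) (v : ι → ℂ) :
    Filter.Tendsto (fun k : ℕ => (T ^ k) *ᵥ v) Filter.atTop (nhds 0) := by
  rcases isEmpty_or_nonempty ι with hι | hι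
  · rw [show (fun k : ℕ => (T ^ k) *ᵥ v) = fun _ => 0 from by ext k i; exact hι.elim i]
    exact tendsto_const_nhds
  let _ : NormedRing (Matrix ι ι ℂ) := Matrix.linftyOpNormedRing
  let _ : NormedAlgebra ℂ (Matrix ι ι ℂ) := Matrix.linftyOpNormedAlgebra
  have hs : spectralRadius ℂ T < (1 : NNReal) :=
    spectrum.spectralRadius_lt_of_forall_lt T (fun z hz => by
      have := h z hz
      exact_mod_cast this)
  obtain ⟨r, hr1, hr2⟩ := ENNReal.lt_iff_exists_nnreal_btwn.mp hs
  have hg := (spectrum.pow_nnnorm_pow_one_div_tendsto_nhds_spectralRadius T).eventually_lt_const hr1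
  have hr3 : r < 1 := by exact_mod_cast hr2
  have h0 : Filter.Tendsto (fun k : ℕ => (r : ℝ) ^ k * ‖v‖) Filter.atTop (nhds 0) := by
    have := (tendsto_pow_atTop_nhds_zero_of_lt_one (r := (r : ℝ)) r.2 (by exact_mod_cast hr3)).mul_const ‖v‖
    simpa using this
  refine squeeze_zero_norm' ?_ h0
  filter_upwards [hg, Filter.eventually_gt_atTop 0] with k hk hk0
  refine (Matrix.linfty_opNorm_mulVec _ _).trans ?_
  gcongr
  have h2 : (‖T ^ k‖₊ : ENNReal) ≤ (r : ENNReal) ^ k := by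
    have := ENNReal.rpow_le_rpow hk.le (z := (k : ℝ)) (by positivity)
    rw [← ENNReal.rpow_mul, one_div, inv_mul_cancel₀ (by positivity), ENNReal.rpow_one,
      ENNReal.rpow_natCast] at this
    exact this
  have h3 : ‖T ^ k‖₊ ≤ r ^ k := by exact_mod_cast h2
  exact_mod_cast h3

theorem ric_lyap {F E Q : Matrix ι ι ℂ} (hF : ∀ z ∈ spectrum ℂ F, z.re < 0)
    (hE : E.IsHermitian) (hQ : Q.PosSemidef) (h : Fᴴ * E + E * F + Q = 0) : E.PosSemidef := by
  have hu : IsUnit (1 - F) := by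
    by_contra hc
    have : (1 : ℂ) ∈ spectrum ℂ F := by
      rw [spectrum.mem_iff]; simpa using hc
    have := hF _ this
    norm_num at this
  obtain ⟨U, hU⟩ := hu
  set R : Matrix ι ι ℂ := ↑U⁻¹ with hR
  have hR1 : (1 - F) * R = 1 := by rw [← hU]; simp [R]
  have hR2 : R * (1 - F) = 1 := by rw [← hU]; simp [R]
  set T := (1 + F) * R with hT
  have hspec : ∀ z ∈ spectrum ℂ T, ‖z‖ < 1 := by
    intro z hz
    obtain ⟨v, hv0, hv⟩ := ric_mem_spec.mp hz
    set w := R *ᵥ v with hw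
    have hvw : v = (1 - F) *ᵥ w := by rw [hw, mulVec_mulVec, hR1, one_mulVec]
    have hw0 : w ≠ 0 := by
      intro h0; rw [h0, mulVec_zero] at hvw; exact hv0 hvw
    have e : w + F *ᵥ w = z • (w - F *ᵥ w) := by
      rw [hT, ← mulVec_mulVec, ← hw] at hv
      have hv2 : (1 + F) *ᵥ w = z • ((1 - F) *ᵥ w) := by rw [hv, ← hvw]
      simpa [add_mulVec, sub_mulVec] using hv2
    have e2 : (1 + z) • (F *ᵥ w) = (z - 1) • w := by
      have : (1 + z) • (F *ᵥ w) - (z - 1) • w = (w + F *ᵥ w) - z • (w - F *ᵥ w) := by module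
      rw [e, sub_self] at this
      exact sub_eq_zero.mp this
    have hz1 : 1 + z ≠ 0 := by
      intro h0
      rw [h0, zero_smul] at e2
      have hz' : z = -1 := by linear_combination h0
      rcases smul_eq_zero.mp e2.symm with h1 | h1
      · rw [hz'] at h1; norm_num at h1
      · exact hw0 h1
    have e3 : F *ᵥ w = ((z - 1) / (1 + z)) • w := by
      rw [div_eq_inv_mul, ← smul_smul, ← e2, smul_smul, inv_mul_cancel₀ hz1, one_smul]
    have h4 := hF _ (ric_mem_spec.mpr ⟨w, hw0, e3⟩)
    rw [Complex.div_re, ← add_div] at h4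
    have hpos : 0 < Complex.normSq (1 + z) := Complex.normSq_pos.mpr hz1
    rw [div_neg_iff] at h4
    rcases h4 with h4 | h4
    · linarith [h4.2]
    · have h5 := h4.1
      simp at h5
      have : ‖z‖ ^ 2 < 1 := by
        rw [← Complex.normSq_eq_norm_sq, Complex.normSq_apply]; nlinarith
      nlinarith [norm_nonneg z]
  have hstein : E = Tᴴ * E * T + (2 : ℂ) • (Rᴴ * Q * R) := by
    have hR1' : Rᴴ * (1 - Fᴴ) = 1 := by
      have := congrArg conjTranspose hR1
      simpa using this
    have hQ' : Q = -(Fᴴ * E + E * F) := by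
      rw [eq_neg_iff_add_eq_zero, add_comm]; exact h
    have e1 : E = Rᴴ * ((1 - Fᴴ) * E * (1 - F)) * R := by
      calc E = (Rᴴ * (1 - Fᴴ)) * E * ((1 - F) * R) := by rw [hR1, hR1']; simp
        _ = _ := by simp only [Matrix.mul_assoc]
    have e2 : Tᴴ * E * T = Rᴴ * ((1 + Fᴴ) * E * (1 + F)) * R := by
      rw [hT, conjTranspose_mul]; simp [Matrix.mul_assoc]
    rw [e2]
    nth_rw 1 [e1]
    rw [← Matrix.smul_mul, ← Matrix.mul_smul, ← add_mul, ← mul_add]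
    congr 2
    rw [hQ', two_smul]
    noncomm_ring
  have hmono : ∀ v : ι → ℂ, star (T *ᵥ v) ⬝ᵥ (E *ᵥ (T *ᵥ v)) ≤ star v ⬝ᵥ (E *ᵥ v) := by
    intro v
    have h1 : 0 ≤ star v ⬝ᵥ ((Rᴴ * Q * R) *ᵥ v) :=
      (hQ.conjTranspose_mul_mul_same R).dotProduct_mulVec_nonneg v
    have h2 : star v ⬝ᵥ (E *ᵥ v) = star (T *ᵥ v) ⬝ᵥ (E *ᵥ (T *ᵥ v))
        + 2 * star v ⬝ᵥ ((Rᴴ * Q * R) *ᵥ v) := by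
      nth_rw 1 [hstein]
      rw [add_mulVec, dotProduct_add, smul_mulVec, dotProduct_smul, star_mulVec,
        ← dotProduct_mulVec]
      simp [mulVec_mulVec, Matrix.mul_assoc]
    rw [h2]
    exact le_add_of_nonneg_right (mul_nonneg (by norm_num) h1)
  refine PosSemidef.of_dotProduct_mulVec_nonneg hE (fun v => ?_)
  have hk : ∀ k : ℕ, star ((T ^ k) *ᵥ v) ⬝ᵥ (E *ᵥ ((T ^ k) *ᵥ v)) ≤ star v ⬝ᵥ (E *ᵥ v) := by
    intro k
    induction k with
    | zero => simp
    | succ k ih =>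
      refine le_trans ?_ ih
      rw [pow_succ', ← mulVec_mulVec]
      exact hmono _
  have ht := ric_pow_tendsto T hspec v
  have hc : Continuous (fun u : ι → ℂ => star u ⬝ᵥ (E *ᵥ u)) := by
    unfold dotProduct Matrix.mulVec dotProduct
    simp only [Pi.star_apply]
    fun_prop
  have := (hc.tendsto 0).comp ht
  simp only [star_zero, mulVec_zero, dotProduct_zero] at this
  exact le_of_tendsto' this hk
end helpers

section main
variable {n m p : Type*} [Fintype n] [DecidableEq n] [Fintype m] [Fintype p]

theorem ric_gram (B : Matrix n m ℂ) (y : n → ℂ) :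
    star y ⬝ᵥ ((B * Bᴴ) *ᵥ y) = star (Bᴴ *ᵥ y) ⬝ᵥ (Bᴴ *ᵥ y) := by
  rw [star_mulVec, ← dotProduct_mulVec, conjTranspose_conjTranspose, mulVec_mulVec]

theorem ric_gram_nonneg (B : Matrix n m ℂ) (y : n → ℂ) :
    0 ≤ star y ⬝ᵥ ((B * Bᴴ) *ᵥ y) := by
  rw [ric_gram]; exact dotProduct_star_self_nonneg _

theorem ric_gram_zero {B : Matrix n m ℂ} {y : n → ℂ}
    (h : star y ⬝ᵥ ((B * Bᴴ) *ᵥ y) = 0) : Bᴴ *ᵥ y = 0 := by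
  rw [ric_gram] at h; exact dotProduct_star_self_eq_zero.mp h

theorem ric_prod_eval (s : Multiset ℂ) (z : ℂ) :
    ((s.map (fun a => X - C a)).prod).eval z = 0 ↔ z ∈ s := by
  rw [← Polynomial.IsRoot.def, ← Polynomial.mem_roots (Polynomial.monic_multisetProd_X_sub_C s).ne_zero,
    Polynomial.roots_multiset_prod_X_sub_C]

theorem ric_split (H : Matrix n n ℂ) (hH : ∀ z ∈ spectrum ℂ H, z.re ≠ 0) :
    ∃ q r : ℂ[X], q * r = H.charpoly ∧ (∀ z, q.eval z = 0 → z.re < 0) ∧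
      (∀ z, r.eval z = 0 → 0 < z.re) := by
  classical
  refine ⟨((H.charpoly.roots.filter (fun z => z.re < 0)).map (fun a => X - C a)).prod,
    ((H.charpoly.roots.filter (fun z => ¬ z.re < 0)).map (fun a => X - C a)).prod, ?_, ?_, ?_⟩
  · rw [← Multiset.prod_add, ← Multiset.map_add, Multiset.filter_add_not]
    exact ((IsAlgClosed.splits H.charpoly).eq_prod_roots_of_monic H.charpoly_monic).symm
  · intro z hz
    rw [ric_prod_eval, Multiset.mem_filter] at hz
    exact hz.2
  · intro z hz
    rw [ric_prod_eval, Multiset.mem_filter] at hz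
    have h1 := hH z (Matrix.mem_spectrum_iff_isRoot_charpoly.mpr (Polynomial.isRoot_of_mem_roots hz.1))
    exact lt_of_le_of_ne (not_lt.mp hz.2) (Ne.symm h1)

theorem ric_inv {H : Matrix n n ℂ} {q : ℂ[X]} {v : n → ℂ} (h : aeval H q *ᵥ v = 0) :
    aeval H q *ᵥ (H *ᵥ v) = 0 := by
  rw [mulVec_mulVec, ric_intertwine (M := H) (N := H) (X := H) rfl, ← mulVec_mulVec, h, mulVec_zero]

def ricH (A : Matrix n n ℂ) (B : Matrix n m ℂ) (C : Matrix p n ℂ) : Matrix (n ⊕ n) (n ⊕ n) ℂ :=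
  fromBlocks A (-(B * Bᴴ)) (-(Cᴴ * C)) (-Aᴴ)

def ricJ (n : Type*) [DecidableEq n] : Matrix (n ⊕ n) (n ⊕ n) ℂ :=
  fromBlocks 0 1 (-1) 0

variable (A : Matrix n n ℂ) (B : Matrix n m ℂ) (C : Matrix p n ℂ)

theorem ricH_elim (x y : n → ℂ) : ricH A B C *ᵥ Sum.elim x y =
    Sum.elim (A *ᵥ x - (B * Bᴴ) *ᵥ y) (-((Cᴴ * C) *ᵥ x) - Aᴴ *ᵥ y) := by
  rw [ricH, fromBlocks_mulVec]
  simp [neg_mulVec, sub_eq_add_neg]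

theorem ricJ_dot (x y x' y' : n → ℂ) :
    star (Sum.elim x y) ⬝ᵥ (ricJ n *ᵥ Sum.elim x' y') = star x ⬝ᵥ y' - star y ⬝ᵥ x' := by
  rw [ricJ, fromBlocks_mulVec]
  have : star (Sum.elim x y) = Sum.elim (star x) (star y) := by
    ext i; cases i <;> rfl
  rw [this, sumElim_dotProduct_sumElim]
  simp [neg_mulVec, sub_eq_add_neg]

theorem ricJ_H : ricJ n * ricH A B C = -(ricH A B C)ᴴ * ricJ n := by
  rw [ricJ, ricH, fromBlocks_conjTranspose, neg_mul, fromBlocks_multiply, fromBlocks_multiply,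
    fromBlocks_neg]
  simp


theorem ricH_spec
    (hstab : ∀ lam : ℂ, 0 ≤ lam.re → ∀ y : n → ℂ,
      Aᴴ *ᵥ y = lam • y → Bᴴ *ᵥ y = 0 → y = 0)
    (hdet : ∀ lam : ℂ, 0 ≤ lam.re → ∀ x : n → ℂ,
      A *ᵥ x = lam • x → C *ᵥ x = 0 → x = 0)
    : ∀ z ∈ spectrum ℂ (ricH A B C), z.re ≠ 0 := by
  intro z hz hre
  obtain ⟨v, hv0, hv⟩ := ric_mem_spec.mp hz
  obtain ⟨x, y, rfl⟩ : ∃ x y, v = Sum.elim x y :=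
    ⟨v ∘ Sum.inl, v ∘ Sum.inr, (Sum.elim_comp_inl_inr v).symm⟩
  rw [ricH_elim] at hv
  have h1 : A *ᵥ x - (B * Bᴴ) *ᵥ y = z • x := by
    ext i; simpa using congrFun hv (Sum.inl i)
  have h2 : -((Cᴴ * C) *ᵥ x) - Aᴴ *ᵥ y = z • y := by
    ext i; simpa using congrFun hv (Sum.inr i)
  have hk := ric_gram_nonneg Cᴴ x
  have hg := ric_gram_nonneg B y
  rw [conjTranspose_conjTranspose] at hk
  have e1 := congrArg (fun u => star y ⬝ᵥ u) h1
  have e2 := congrArg (fun u => star (star x ⬝ᵥ u)) h2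
  have hs : star (star x ⬝ᵥ y) = star y ⬝ᵥ x := by
    rw [← star_dotProduct_star, star_star]
  have ha : star (star x ⬝ᵥ (Aᴴ *ᵥ y)) = star y ⬝ᵥ (A *ᵥ x) := by
    rw [← star_dotProduct_star, star_star, star_mulVec, conjTranspose_conjTranspose,
      ← dotProduct_mulVec]
  have hkr : star (star x ⬝ᵥ ((Cᴴ * C) *ᵥ x)) = star x ⬝ᵥ ((Cᴴ * C) *ᵥ x) :=
    (IsSelfAdjoint.of_nonneg hk).star_eq
  simp only [dotProduct_sub, dotProduct_neg, dotProduct_smul, star_sub, star_neg, smul_eq_mul,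
    star_mul', hs, ha, hkr] at e1 e2
  have hzz : z + star z = 0 := by
    apply Complex.ext <;> simp [hre]
  have e3 : star y ⬝ᵥ ((B * Bᴴ) *ᵥ y) + star x ⬝ᵥ ((Cᴴ * C) *ᵥ x) = 0 := by
    linear_combination -e1 - e2 - hzz * (star y ⬝ᵥ x)
  obtain ⟨g0, k0⟩ := (add_eq_zero_iff_of_nonneg hg hk).mp e3
  have hB := ric_gram_zero g0
  have hC := ric_gram_zero (B := Cᴴ) (y := x) (by rw [conjTranspose_conjTranspose]; exact k0)
  rw [conjTranspose_conjTranspose] at hC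
  rw [← mulVec_mulVec, hB, mulVec_zero, sub_zero] at h1
  rw [← mulVec_mulVec, hC, mulVec_zero, neg_zero, zero_sub] at h2
  have hx := hdet z hre.ge x h1 hC
  have hy := hstab (-z) (by simp [hre]) y (by rw [neg_smul, ← h2, neg_neg]) hB
  apply hv0
  rw [hx, hy]
  ext i; cases i <;> rfl

theorem ric_iso_neg {q : ℂ[X]} (hq : ∀ z, q.eval z = 0 → z.re < 0) {x y x' y' : n → ℂ}
    (hv : aeval (ricH A B C) q *ᵥ (Sum.elim x y) = 0)
    (hw : aeval (ricH A B C) q *ᵥ (Sum.elim x' y') = 0) : star x ⬝ᵥ y' = star y ⬝ᵥ x' := by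
  have := ric_iso (ricJ_H A B C) (q := q) (by
    intro z w hz hw h
    have := congrArg Complex.re h
    simp at this
    linarith [hq z hz, hq w hw]) hv hw
  rw [ricJ_dot] at this
  exact sub_eq_zero.mp this

theorem ric_iso_pos {q : ℂ[X]} (hq : ∀ z, q.eval z = 0 → 0 < z.re) {x y x' y' : n → ℂ}
    (hv : aeval (ricH A B C) q *ᵥ (Sum.elim x y) = 0)
    (hw : aeval (ricH A B C) q *ᵥ (Sum.elim x' y') = 0) : star x ⬝ᵥ y' = star y ⬝ᵥ x' := by
  have := ric_iso (ricJ_H A B C) (q := q) (by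
    intro z w hz hw h
    have := congrArg Complex.re h
    simp at this
    linarith [hq z hz, hq w hw]) hv hw
  rw [ricJ_dot] at this
  exact sub_eq_zero.mp this

def ricInl : (n → ℂ) →ₗ[ℂ] (n ⊕ n → ℂ) where
  toFun x := Sum.elim x 0
  map_add' x y := by ext i; cases i <;> simp
  map_smul' x y := by ext i; cases i <;> simp

def ricInr : (n → ℂ) →ₗ[ℂ] (n ⊕ n → ℂ) where
  toFun x := Sum.elim 0 x
  map_add' x y := by ext i; cases i <;> simp
  map_smul' x y := by ext i; cases i <;> simp

theorem ric_elim_ne {v : n ⊕ n → ℂ} {q : ℂ[X]} {M : Matrix (n ⊕ n) (n ⊕ n) ℂ} {z : ℂ}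
    (hv : v ≠ 0) (h : M *ᵥ v = z • v) (h0 : aeval M q *ᵥ v = 0) : q.eval z = 0 := by
  rw [ric_aeval_eig h] at h0
  exact (smul_eq_zero.mp h0).resolve_right hv

theorem ric_inj_neg
    (hstab : ∀ lam : ℂ, 0 ≤ lam.re → ∀ y : n → ℂ,
      Aᴴ *ᵥ y = lam • y → Bᴴ *ᵥ y = 0 → y = 0)
    {q : ℂ[X]} (hq : ∀ z, q.eval z = 0 → z.re < 0) (y : n → ℂ)
    (hy : aeval (ricH A B C) q *ᵥ (Sum.elim 0 y) = 0) : y = 0 := by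
  by_contra hy0
  let W : Submodule ℂ (n → ℂ) :=
    (LinearMap.ker (aeval (ricH A B C) q).mulVecLin).comap ricInr
  have hWmem : ∀ y, y ∈ W ↔ aeval (ricH A B C) q *ᵥ (Sum.elim 0 y) = 0 := fun y => Iff.rfl
  have hB : ∀ y ∈ W, Bᴴ *ᵥ y = 0 := by
    intro y hy
    rw [hWmem] at hy
    have h1 := ric_inv hy
    rw [ricH_elim] at h1
    have h2 := ric_iso_neg A B C hq hy h1
    apply ric_gram_zero
    simpa using h2
  have hH : ∀ y ∈ W, ricH A B C *ᵥ Sum.elim 0 y = Sum.elim (0 : n → ℂ) (-(Aᴴ *ᵥ y)) := by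
    intro y hy
    rw [ricH_elim, ← mulVec_mulVec, hB y hy]
    simp
  have hinv : ∀ y ∈ W, Aᴴ *ᵥ y ∈ W := by
    intro y hy
    have h1 := ric_inv ((hWmem y).mp hy)
    rw [hH y hy] at h1
    have := W.neg_mem ((hWmem _).mpr h1)
    simpa using this
  obtain ⟨v, hv, hv0, μ, hμ⟩ := ric_exists_eig Aᴴ W hinv ⟨y, (hWmem y).mpr hy, hy0⟩
  have h3 : ricH A B C *ᵥ Sum.elim 0 v = (-μ) • (Sum.elim 0 v : n ⊕ n → ℂ) := by
    rw [hH v hv, hμ]; ext i; cases i <;> simp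
  have h4 := hq _ (ric_elim_ne (by
    intro h; apply hv0; ext i; simpa using congrFun h (Sum.inr i)) h3 ((hWmem v).mp hv))
  simp at h4
  exact hv0 (hstab μ h4.le v hμ (hB v hv))

theorem ric_inj_pos
    (hdet : ∀ lam : ℂ, 0 ≤ lam.re → ∀ x : n → ℂ,
      A *ᵥ x = lam • x → C *ᵥ x = 0 → x = 0)
    {q : ℂ[X]} (hq : ∀ z, q.eval z = 0 → 0 < z.re) (x : n → ℂ)
    (hx : aeval (ricH A B C) q *ᵥ (Sum.elim x 0) = 0) : x = 0 := by
  by_contra hx0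
  let W : Submodule ℂ (n → ℂ) :=
    (LinearMap.ker (aeval (ricH A B C) q).mulVecLin).comap ricInl
  have hWmem : ∀ y, y ∈ W ↔ aeval (ricH A B C) q *ᵥ (Sum.elim y 0) = 0 := fun y => Iff.rfl
  have hB : ∀ y ∈ W, C *ᵥ y = 0 := by
    intro y hy
    rw [hWmem] at hy
    have h1 := ric_inv hy
    rw [ricH_elim] at h1
    have h2 := ric_iso_pos A B C hq hy h1
    have := ric_gram_zero (B := Cᴴ) (y := y) (by
      rw [conjTranspose_conjTranspose]
      simpa using h2)
    simpa using this
  have hH : ∀ y ∈ W, ricH A B C *ᵥ Sum.elim y 0 = Sum.elim (A *ᵥ y) (0 : n → ℂ) := by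
    intro y hy
    rw [ricH_elim, ← mulVec_mulVec, ← mulVec_mulVec, hB y hy]
    simp
  have hinv : ∀ y ∈ W, A *ᵥ y ∈ W := by
    intro y hy
    have h1 := ric_inv ((hWmem y).mp hy)
    rw [hH y hy] at h1
    exact (hWmem _).mpr h1
  obtain ⟨v, hv, hv0, μ, hμ⟩ := ric_exists_eig A W hinv ⟨x, (hWmem x).mpr hx, hx0⟩
  have h3 : ricH A B C *ᵥ Sum.elim v 0 = μ • (Sum.elim v 0 : n ⊕ n → ℂ) := by
    rw [hH v hv, hμ]; ext i; cases i <;> simp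
  have h4 := hq _ (ric_elim_ne (by
    intro h; apply hv0; ext i; simpa using congrFun h (Sum.inl i)) h3 ((hWmem v).mp hv))
  exact hv0 (hdet μ h4.le v hμ (hB v hv))

theorem ric_graph
    (hstab : ∀ lam : ℂ, 0 ≤ lam.re → ∀ y : n → ℂ,
      Aᴴ *ᵥ y = lam • y → Bᴴ *ᵥ y = 0 → y = 0)
    (hdet : ∀ lam : ℂ, 0 ≤ lam.re → ∀ x : n → ℂ,
      A *ᵥ x = lam • x → C *ᵥ x = 0 → x = 0)
    : ∃ (q : ℂ[X]) (E : Matrix n n ℂ), (∀ z, q.eval z = 0 → z.re < 0) ∧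
    (∀ x, aeval (ricH A B C) q *ᵥ (Sum.elim x (E *ᵥ x)) = 0) ∧
    (∀ x y, aeval (ricH A B C) q *ᵥ (Sum.elim x y) = 0 → y = E *ᵥ x) := by
  obtain ⟨q, r, hqr, hq, hr⟩ := ric_split _ (ricH_spec A B C hstab hdet)
  let V := LinearMap.ker (aeval (ricH A B C) q).mulVecLin
  let W := LinearMap.ker (aeval (ricH A B C) r).mulVecLin
  have hV : ∀ v, v ∈ V ↔ aeval (ricH A B C) q *ᵥ v = 0 := fun _ => Iff.rfl
  have hW : ∀ v, v ∈ W ↔ aeval (ricH A B C) r *ᵥ v = 0 := fun _ => Iff.rfl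
  have hsup : V ⊔ W = ⊤ := by
    obtain ⟨a, b, hab⟩ := ric_coprime (p := q) (q := r) (by
      intro z h1 h2; linarith [hq z h1, hr z h2])
    rw [eq_top_iff]
    intro v _
    have h1 : v = aeval (ricH A B C) (b * r) *ᵥ v + aeval (ricH A B C) (a * q) *ᵥ v := by
      rw [← add_mulVec, ← map_add, add_comm (b * r), hab, map_one, one_mulVec]
    rw [h1]
    refine Submodule.add_mem_sup ?_ ?_
    · rw [hV, mulVec_mulVec, ← map_mul, show q * (b * r) = b * (q * r) by ring, hqr, map_mul,
        aeval_self_charpoly, mul_zero, zero_mulVec]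
    · rw [hW, mulVec_mulVec, ← map_mul, show r * (a * q) = a * (q * r) by ring, hqr, map_mul,
        aeval_self_charpoly, mul_zero, zero_mulVec]
  let f : V →ₗ[ℂ] (n → ℂ) := (LinearMap.funLeft ℂ ℂ (Sum.inl : n → n ⊕ n)).comp V.subtype
  let g : W →ₗ[ℂ] (n → ℂ) := (LinearMap.funLeft ℂ ℂ (Sum.inr : n → n ⊕ n)).comp W.subtype
  have hf : Function.Injective f := by
    rw [← LinearMap.ker_eq_bot, LinearMap.ker_eq_bot']
    rintro ⟨v, hv⟩ h
    have h1 : v = Sum.elim (0 : n → ℂ) (v ∘ Sum.inr) := by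
      ext i
      rcases i with i | i
      · exact congrFun h i
      · rfl
    have h2 := ric_inj_neg A B C hstab hq (v ∘ Sum.inr) (by rw [← h1]; exact hv)
    rw [h2] at h1
    apply Subtype.ext
    change v = 0
    rw [h1]; ext i; cases i <;> rfl
  have hg : Function.Injective g := by
    rw [← LinearMap.ker_eq_bot, LinearMap.ker_eq_bot']
    rintro ⟨v, hv⟩ h
    have h1 : v = Sum.elim (v ∘ Sum.inl) (0 : n → ℂ) := by
      ext i
      rcases i with i | i
      · rfl
      · exact congrFun h i
    have h2 := ric_inj_pos A B C hdet hr (v ∘ Sum.inl) (by rw [← h1]; exact hv)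
    rw [h2] at h1
    apply Subtype.ext
    change v = 0
    rw [h1]; ext i; cases i <;> rfl
  have d1 := LinearMap.finrank_le_finrank_of_injective hf
  have d2 := LinearMap.finrank_le_finrank_of_injective hg
  have d3 := Submodule.finrank_add_le_finrank_add_finrank V W
  rw [hsup, finrank_top] at d3
  simp only [Module.finrank_fintype_fun_eq_card, Fintype.card_sum] at d1 d2 d3
  have hfs : Function.Surjective f :=
    (LinearMap.injective_iff_surjective_of_finrank_eq_finrank (by
      rw [Module.finrank_fintype_fun_eq_card]; omega)).mp hf
  let e := LinearEquiv.ofBijective f ⟨hf, hfs⟩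
  let h : (n → ℂ) →ₗ[ℂ] (n → ℂ) :=
    ((LinearMap.funLeft ℂ ℂ (Sum.inr : n → n ⊕ n)).comp V.subtype).comp e.symm.toLinearMap
  have hh : ∀ x, LinearMap.toMatrix' h *ᵥ x = h x := fun x => by
    rw [← Matrix.toLin'_apply, Matrix.toLin'_toMatrix']
  have hgr : ∀ x, ((e.symm x : V) : n ⊕ n → ℂ) = Sum.elim x (h x) := by
    intro x
    ext i
    rcases i with i | i
    · have : f (e.symm x) = x := e.apply_symm_apply x
      exact congrFun this i
    · rfl
  refine ⟨q, LinearMap.toMatrix' h, hq, ?_, ?_⟩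
  · intro x
    rw [hh, ← hgr]
    exact (e.symm x).2
  · intro x y hxy
    have h1 : (⟨Sum.elim x y, hxy⟩ : V) = e.symm x := by
      rw [LinearEquiv.eq_symm_apply]
      rfl
    rw [hh]
    have h2 := congrArg Subtype.val h1
    rw [hgr] at h2
    ext i
    exact congrFun h2 (Sum.inr i)

end main

theorem riccati_unique_stabilizing_possemidef_solution
    {n m p : Type*} [Fintype n] [DecidableEq n] [Fintype m] [Fintype p]
    (A : Matrix n n ℂ) (B : Matrix n m ℂ) (C : Matrix p n ℂ)
    (hstab : ∀ lam : ℂ, 0 ≤ lam.re → ∀ y : n → ℂ,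
      Aᴴ *ᵥ y = lam • y → Bᴴ *ᵥ y = 0 → y = 0)
    (hdet : ∀ lam : ℂ, 0 ≤ lam.re → ∀ x : n → ℂ,
      A *ᵥ x = lam • x → C *ᵥ x = 0 → x = 0) :
    ∃! E : Matrix n n ℂ, E.PosSemidef ∧
      Aᴴ * E + E * A - E * (B * Bᴴ) * E + Cᴴ * C = 0 ∧
      ∀ lam ∈ spectrum ℂ (A - (B * Bᴴ) * E), lam.re < 0 := by
  obtain ⟨q, E, hq, h1, h2⟩ := ric_graph A B C hstab hdet
  have hHx : ∀ x, ricH A B C *ᵥ Sum.elim x (E *ᵥ x) = Sum.elim ((A - (B * Bᴴ) * E) *ᵥ x)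
      (-((Cᴴ * C) *ᵥ x) - Aᴴ *ᵥ (E *ᵥ x)) := by
    intro x
    rw [ricH_elim, sub_mulVec, ← mulVec_mulVec (M := B * Bᴴ)]
  have hHx2 : ∀ x, -((Cᴴ * C) *ᵥ x) - Aᴴ *ᵥ (E *ᵥ x) = E *ᵥ ((A - (B * Bᴴ) * E) *ᵥ x) := by
    intro x
    apply h2
    rw [← hHx]
    exact ric_inv (h1 x)
  have hric : Aᴴ * E + E * A - E * (B * Bᴴ) * E + Cᴴ * C = 0 := by
    have h3 : -(Cᴴ * C) - Aᴴ * E = E * (A - (B * Bᴴ) * E) := by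
      apply Matrix.toLin'.injective
      apply LinearMap.ext
      intro x
      rw [toLin'_apply, toLin'_apply, ← mulVec_mulVec, ← hHx2, sub_mulVec, neg_mulVec,
        ← mulVec_mulVec (M := Aᴴ)]
    have h4 : Aᴴ * E + E * A - E * (B * Bᴴ) * E + Cᴴ * C
        = E * (A - (B * Bᴴ) * E) - (-(Cᴴ * C) - Aᴴ * E) := by
      simp only [Matrix.mul_sub, Matrix.mul_assoc]; abel
    rw [h4, h3, sub_self]
  have hherm : E.IsHermitian := by
    have h3 : ∀ x y, star x ⬝ᵥ (E *ᵥ y) = star x ⬝ᵥ (Eᴴ *ᵥ y) := by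
      intro x y
      rw [ric_iso_neg A B C hq (h1 x) (h1 y), star_mulVec, ← dotProduct_mulVec]
    ext i j
    have := h3 (Pi.single i 1) (Pi.single j 1)
    simpa using this.symm
  have hst : ∀ lam ∈ spectrum ℂ (A - (B * Bᴴ) * E), lam.re < 0 := by
    intro z hz
    obtain ⟨x, hx0, hx⟩ := ric_mem_spec.mp hz
    have h3 : ricH A B C *ᵥ Sum.elim x (E *ᵥ x) = z • (Sum.elim x (E *ᵥ x) : n ⊕ n → ℂ) := by
      rw [hHx, hHx2, hx, mulVec_smul]
      ext i; cases i <;> simp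
    exact hq z (ric_elim_ne (by
      intro h; apply hx0; ext i; simpa using congrFun h (Sum.inl i)) h3 (h1 x))
  refine ⟨E, ⟨?_, hric, hst⟩, ?_⟩
  · refine ric_lyap (Q := E * (B * Bᴴ) * E + Cᴴ * C) hst hherm ?_ ?_
    · refine PosSemidef.add ?_ (posSemidef_conjTranspose_mul_self C)
      have := (posSemidef_self_mul_conjTranspose B).conjTranspose_mul_mul_same E
      rwa [hherm.eq] at this
    · rw [← hric]
      simp only [conjTranspose_sub, conjTranspose_mul, conjTranspose_conjTranspose, hherm.eq,
        Matrix.sub_mul, Matrix.mul_sub, Matrix.mul_assoc]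
      abel
  · rintro E' ⟨hE', hric', hst'⟩
    have hs : (A - (B * Bᴴ) * E')ᴴ * (E' - E) = (E' - E) * (-(A - (B * Bᴴ) * E)) := by
      rw [← sub_eq_zero]
      have h3 : (0 : Matrix n n ℂ) = (Aᴴ * E' + E' * A - E' * (B * Bᴴ) * E' + Cᴴ * C)
        - (Aᴴ * E + E * A - E * (B * Bᴴ) * E + Cᴴ * C) := by rw [hric, hric', sub_zero]
      rw [h3]
      simp only [conjTranspose_sub, conjTranspose_mul, conjTranspose_conjTranspose,
        hE'.isHermitian.eq, Matrix.sub_mul, Matrix.mul_sub, Matrix.mul_neg, Matrix.mul_assoc]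
      abel
    refine sub_eq_zero.mp (ric_sylvester hs ?_)
    intro z hz1 hz2
    have a1 : (star z).re < 0 := by
      apply hst'
      rw [← star_eq_conjTranspose, spectrum.map_star] at hz1
      exact hz1
    have a2 : (-z).re < 0 := by
      apply hst
      have := spectrum.neg_eq (R := ℂ) (A - (B * Bᴴ) * E)
      rw [← this] at hz2
      simpa using hz2
    simp at a1 a2
    linarith
end

section
/- (Spectrum of the N-fold Kronecker sum) Let m N : ℕ with N ≥ 1, and A : Matrix (Fin m) (Fin m) ℂ. Define the Kronecker sum M : Matrix (Fin N → Fin m) (Fin N → Fin m) ℂ by M p q = ∑ t : Fin N, (if ∀ k ≠ t, p k = q k then A (p t) (q t) else 0). Then spectrum ℂ M = { z : ℂ | ∃ f : Fin N → ℂ, (∀ t, f t ∈ spectrum ℂ A) ∧ z = ∑ t, f t }, i.e., the eigenvalues of M are exactly the N-fold sums of eigenvalues of A. -/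
open Matrix

/-- `A` acting in the `t`-th factor. -/
noncomputable def ksT {m N : ℕ} (A : Matrix (Fin m) (Fin m) ℂ) (t : Fin N) :
    Module.End ℂ ((Fin N → Fin m) → ℂ) where
  toFun v := fun p => ∑ i, A (p t) i * v (Function.update p t i)
  map_add' v w := by
    ext p; simp [mul_add, Finset.sum_add_distrib]
  map_smul' c v := by
    ext p; simp [Finset.mul_sum, mul_left_comm]

lemma ksT_apply {m N : ℕ} (A : Matrix (Fin m) (Fin m) ℂ) (t : Fin N)
    (v : (Fin N → Fin m) → ℂ) (p : Fin N → Fin m) :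
    ksT A t v p = ∑ i, A (p t) i * v (Function.update p t i) := rfl

lemma ksT_comm {m N : ℕ} (A : Matrix (Fin m) (Fin m) ℂ) (s t : Fin N) (h : s ≠ t) :
    Commute (ksT A s) (ksT A t) := by
  refine LinearMap.ext fun v => funext fun p => ?_
  simp only [Module.End.mul_apply, ksT_apply, Finset.mul_sum]
  rw [Finset.sum_comm]
  refine Finset.sum_congr rfl fun i _ => Finset.sum_congr rfl fun j _ => ?_
  rw [Function.update_of_ne h.symm, Function.update_of_ne h, Function.update_comm h]
  ring

lemma ks_toLin {m N : ℕ} (A : Matrix (Fin m) (Fin m) ℂ) :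
    Matrix.toLin' (Matrix.of fun p q : Fin N → Fin m =>
        ∑ t : Fin N, if ∀ k, k ≠ t → p k = q k then A (p t) (q t) else 0)
      = ∑ t, ksT A t := by
  refine LinearMap.ext fun v => funext fun p => ?_
  simp only [Matrix.toLin'_apply, Matrix.mulVec, dotProduct, Matrix.of_apply,
    LinearMap.sum_apply, Finset.sum_apply, ksT_apply, Finset.sum_mul]
  rw [Finset.sum_comm]
  refine Finset.sum_congr rfl fun t _ => ?_
  symm
  refine Finset.sum_of_injOn (fun i => Function.update p t i) ?_ ?_ ?_ ?_
  · exact (Function.update_injective p t).injOn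
  · intro i _; simp
  · intro q _ hq
    rw [if_neg, zero_mul]
    intro hk
    apply hq
    refine ⟨q t, by simp, ?_⟩
    ext k
    by_cases h : k = t
    · subst h; simp
    · simp [Function.update_of_ne h, hk k h]
  · intro i _
    rw [if_pos]
    · simp
    · intro k hk; simp [Function.update_of_ne hk]

lemma ks_spec {n : Type*} [Fintype n] [DecidableEq n] (A : Matrix n n ℂ) (z : ℂ) :
    z ∈ spectrum ℂ A ↔ ∃ v : n → ℂ, v ≠ 0 ∧ A *ᵥ v = z • v := by
  rw [← Matrix.spectrum_toLin', ← Module.End.hasEigenvalue_iff_mem_spectrum]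
  constructor
  · intro h
    obtain ⟨v, hv⟩ := h.exists_hasEigenvector
    exact ⟨v, hv.2, by simpa using hv.apply_eq_smul⟩
  · rintro ⟨v, h0, hv⟩
    exact Module.End.hasEigenvalue_of_hasEigenvector
      ⟨Module.End.mem_eigenspace_iff.2 (by simpa using hv), h0⟩

lemma ks_add {V : Type*} [AddCommGroup V] [Module ℂ V] [FiniteDimensional ℂ V]
    (f g : Module.End ℂ V) (hc : Commute f g) (z : ℂ) (h : (f + g).HasEigenvalue z) :
    ∃ x y, f.HasEigenvalue x ∧ g.HasEigenvalue y ∧ z = x + y := by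
  have hm : ∀ v ∈ (f + g).eigenspace z, f v ∈ (f + g).eigenspace z := by
    intro v hv
    rw [Module.End.mem_eigenspace_iff] at hv ⊢
    have h1 : g (f v) = f (g v) := (LinearMap.congr_fun hc v).symm
    rw [LinearMap.add_apply, h1, ← map_add, ← LinearMap.add_apply, hv, map_smul]
  have : Nontrivial ((f + g).eigenspace z) := Submodule.nontrivial_iff_ne_bot.2 h
  obtain ⟨x, hx⟩ := Module.End.exists_eigenvalue (f.restrict hm)
  obtain ⟨⟨v, hv⟩, hve⟩ := hx.exists_hasEigenvector
  have h1 : f v = x • v := congrArg Subtype.val hve.apply_eq_smul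
  have h0 : v ≠ 0 := fun h => hve.2 (Subtype.ext h)
  rw [Module.End.mem_eigenspace_iff, LinearMap.add_apply, h1] at hv
  refine ⟨x, z - x, Module.End.hasEigenvalue_of_hasEigenvector
      ⟨Module.End.mem_eigenspace_iff.2 h1, h0⟩, Module.End.hasEigenvalue_of_hasEigenvector
      ⟨Module.End.mem_eigenspace_iff.2 ?_, h0⟩, by ring⟩
  rw [sub_smul, ← hv]; abel

lemma ks_sum {V ι : Type*} [AddCommGroup V] [Module ℂ V] [FiniteDimensional ℂ V]
    [DecidableEq ι] (f : ι → Module.End ℂ V) (hc : ∀ i j, i ≠ j → Commute (f i) (f j))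
    (s : Finset ι) : ∀ z : ℂ, (∑ i ∈ s, f i).HasEigenvalue z →
    ∃ x : ι → ℂ, (∀ i ∈ s, (f i).HasEigenvalue (x i)) ∧ z = ∑ i ∈ s, x i := by
  induction s using Finset.induction_on with
  | empty =>
    intro z h
    obtain ⟨v, hv⟩ := h.exists_hasEigenvector
    have := hv.apply_eq_smul
    refine ⟨0, by simp, ?_⟩
    simpa [hv.2, eq_comm] using this
  | insert a s ha ih =>
    intro z h
    rw [Finset.sum_insert ha] at h
    obtain ⟨x, y, hx, hy, rfl⟩ := ks_add _ _
      (Commute.sum_right _ _ _ fun i hi => hc a i (by rintro rfl; exact ha hi)) z h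
    obtain ⟨w, hw, rfl⟩ := ih y hy
    refine ⟨Function.update w a x, ?_, ?_⟩
    · intro i hi
      by_cases h : i = a
      · subst h; simpa using hx
      · rw [Function.update_of_ne h]
        exact hw i (Finset.mem_of_mem_insert_of_ne hi h)
    · rw [Finset.sum_insert ha, Function.update_self]
      congr 1
      refine Finset.sum_congr rfl fun i hi => ?_
      rw [Function.update_of_ne (by rintro rfl; exact ha hi)]

theorem spectrum_kronecker_sum_pow (m N : ℕ) (hN : 1 ≤ N)
    (A : Matrix (Fin m) (Fin m) ℂ) :
    spectrum ℂ (Matrix.of fun p q : Fin N → Fin m =>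
        ∑ t : Fin N, if ∀ k, k ≠ t → p k = q k then A (p t) (q t) else 0)
      = { z : ℂ | ∃ f : Fin N → ℂ, (∀ t, f t ∈ spectrum ℂ A) ∧ z = ∑ t, f t } := by
  ext z
  rw [← Matrix.spectrum_toLin', ks_toLin, ← Module.End.hasEigenvalue_iff_mem_spectrum,
    Set.mem_setOf_eq]
  constructor
  · intro h
    obtain ⟨x, hx, rfl⟩ := ks_sum (ksT A) (ksT_comm A) Finset.univ z h
    refine ⟨x, fun t => ?_, rfl⟩
    obtain ⟨w, hw⟩ := (hx t (Finset.mem_univ t)).exists_hasEigenvector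
    obtain ⟨p, hp⟩ := Function.ne_iff.1 hw.2
    refine (ks_spec A _).2 ⟨fun i => w (Function.update p t i), ?_, ?_⟩
    · intro h
      apply hp
      simpa using congrFun h (p t)
    · ext j
      have := congrFun hw.apply_eq_smul (Function.update p t j)
      simpa [ksT_apply, Matrix.mulVec, dotProduct] using this
  · rintro ⟨f, hf, rfl⟩
    choose v hv0 hv using fun t => (ks_spec A _).1 (hf t)
    refine Module.End.hasEigenvalue_of_hasEigenvector (x := fun p => ∏ t, v t (p t))
      ⟨Module.End.mem_eigenspace_iff.2 ?_, ?_⟩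
    · ext p
      simp only [LinearMap.sum_apply, Finset.sum_apply, ksT_apply, Pi.smul_apply, smul_eq_mul,
        Finset.sum_mul]
      refine Finset.sum_congr rfl fun t _ => ?_
      have h1 : ∀ i, ∏ s, v s (Function.update p t i s)
          = v t i * ∏ s ∈ Finset.univ.erase t, v s (p s) := by
        intro i
        rw [← Finset.mul_prod_erase _ _ (Finset.mem_univ t), Function.update_self]
        congr 1
        refine Finset.prod_congr rfl fun s hs => ?_
        rw [Function.update_of_ne (Finset.ne_of_mem_erase hs)]
      have h2 := congrFun (hv t) (p t)
      simp only [Matrix.mulVec, dotProduct, Pi.smul_apply, smul_eq_mul] at h2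
      simp only [h1, ← mul_assoc]
      rw [← Finset.sum_mul, h2, ← Finset.mul_prod_erase _ _ (Finset.mem_univ t), mul_assoc]
    · choose p hp using fun t => Function.ne_iff.1 (hv0 t)
      intro h
      exact Finset.prod_ne_zero_iff.2 (fun t _ => hp t) (congrFun h p)
end
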